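/- Let n ≥ 5, p ≥ 1 and 1 < s < (n+4)/(n−4). There exists a constant C > 0, depending only on n, p and s, such that every nonnegative C⁴ solution U = (u_1, …, u_p) of Δ² u_i = |U|^{s−1} u_i on the punctured unit ball B₁ \ {0} ⊂ ℝ^n satisfies |U(x)| ≤ C |x|^{−4/(s−1)} for all 0 < |x| < 1/2. -/

import Mathlib

open MeasureTheory Metric Filter Topology

/-- The Euclidean Laplacian: sum of second partial derivatives. -/
noncomputable def lap {n : ℕ} (u : EuclideanSpace ℝ (Fin n) → ℝ)
    (x : EuclideanSpace ℝ (Fin n)) : ℝ :=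
  ∑ i : Fin n,
    fderiv ℝ (fun y => fderiv ℝ u y (EuclideanSpace.single i 1)) x
      (EuclideanSpace.single i 1)

/-- The bi-Laplacian Δ² = Δ ∘ Δ. -/
noncomputable def bilap {n : ℕ} (u : EuclideanSpace ℝ (Fin n) → ℝ) :
    EuclideanSpace ℝ (Fin n) → ℝ :=
  lap (lap u)

/-- The pointwise Euclidean norm |U(x)| of a p-map U. -/
noncomputable def vnorm {n p : ℕ} (U : Fin p → EuclideanSpace ℝ (Fin n) → ℝ)
    (x : EuclideanSpace ℝ (Fin n)) : ℝ :=
  Real.sqrt (∑ i, U i x ^ 2)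

/-!
If the bound failed with arbitrarily large constants, rescaling the solutions around suitable points
would give nonnegative solutions on balls which exhaust the space, uniformly bounded and of norm `1`
at the origin. Localising the fundamental solution `‖x‖ ^ (4 - n)` with a cutoff represents each of
them on every ball as the sum of its average against a fixed smooth kernel and a truncated Riesz
potential of its bi-Laplacian. This makes the rescaled solutions equicontinuous, and passes to the
limit. As the radius of the ball tends to infinity the average converges to a constant, which has to
vanish, so the limit `V` solves `κ V = ‖·‖ ^ (4 - n) ∗ |V| ^ (s - 1) V` on the whole space.

By subcriticality, `V` lies below its Kelvin transform inside small spheres, and the set of radii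
for which this holds is open and closed. Hence it holds inside every sphere; letting spheres
degenerate to hyperplanes shows that `V` is constant, and the integral equation forces the constant
to be `0`, although `‖V 0‖ = 1`. Moving spheres in the integral equation replaces the maximum
principle, which the bi-Laplacian does not have.
-/

namespace BiharmonicSystem

open EuclideanGeometry Module

/-! ### The Riesz kernel -/

section RieszKernel

/-- The unnormalised Riesz kernel `‖z‖⁻ᵐ`; in dimension `m + 4` it is a multiple of the fundamental
solution of the bi-Laplacian. With the conventions of division it vanishes at `0` when `m ≠ 0`. -/
noncomputable def rieszKernel {E : Type*} [NormedAddCommGroup E] (m : ℕ) (z : E) : ℝ :=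
  (‖z‖ ^ m)⁻¹

section Normed

variable {E : Type*} [NormedAddCommGroup E] {m : ℕ}

lemma rieszKernel_nonneg (z : E) : 0 ≤ rieszKernel m z := by unfold rieszKernel; positivity

lemma rieszKernel_pos {z : E} (hz : z ≠ 0) : 0 < rieszKernel m z := by
  have := norm_pos_iff.2 hz
  unfold rieszKernel; positivity

lemma measurable_rieszKernel [MeasurableSpace E] [OpensMeasurableSpace E] :
    Measurable (rieszKernel m : E → ℝ) := by
  unfold rieszKernel; fun_prop

lemma rieszKernel_sub_comm (y z : E) : rieszKernel m (y - z) = rieszKernel m (z - y) := by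
  rw [rieszKernel, rieszKernel, norm_sub_rev]

lemma rieszKernel_sub (y z : E) : rieszKernel m (y - z) = (dist y z ^ m)⁻¹ := by
  rw [rieszKernel, dist_eq_norm]

lemma rieszKernel_smul [NormedSpace ℝ E] {R : ℝ} (hR : 0 ≤ R) (z : E) :
    rieszKernel m (R • z) = (R ^ m)⁻¹ * rieszKernel m z := by
  simp only [rieszKernel, norm_smul, Real.norm_of_nonneg hR, mul_pow, mul_inv]

lemma rieszKernel_smul_sub [NormedSpace ℝ E] {R : ℝ} (hR : 0 < R) (y z : E) :
    rieszKernel m (R • z - y) = (R ^ m)⁻¹ * rieszKernel m (R⁻¹ • y - z) := by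
  rw [rieszKernel_sub_comm, ← rieszKernel_smul hR.le, smul_sub, smul_inv_smul₀ hR.ne']

lemma rieszKernel_le_of_le_norm {z : E} {r : ℝ} (hr : 0 < r) (h : r ≤ ‖z‖) :
    rieszKernel m z ≤ (r ^ m)⁻¹ := by
  unfold rieszKernel; gcongr

lemma rieszKernel_le_indicator_add {r : ℝ} (hr : 0 < r) (z : E) :
    rieszKernel m z ≤ (ball (0 : E) r).indicator (rieszKernel m) z + (r ^ m)⁻¹ := by
  by_cases h : z ∈ ball (0 : E) r
  · rw [Set.indicator_of_mem h]
    exact le_add_of_nonneg_right (by positivity)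
  · rw [Set.indicator_of_notMem h, zero_add]
    exact rieszKernel_le_of_le_norm hr (by simpa using h)

end Normed

variable {E : Type*} [NormedAddCommGroup E] [InnerProductSpace ℝ E] [FiniteDimensional ℝ E]
  [MeasurableSpace E] [BorelSpace E] {m : ℕ}

lemma integrableOn_ball_rieszKernel (hm : m < finrank ℝ E) (R : ℝ) :
    IntegrableOn (rieszKernel m) (ball (0 : E) R) := by
  have : Nontrivial E := nontrivial_of_finrank_pos (m.zero_le.trans_lt hm)
  refine (integrableOn_fun_norm_addHaar (E := E) volume (f := fun r : ℝ => (r ^ m)⁻¹)).2 ?_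
  have hpow : IntegrableOn (fun r : ℝ => r ^ (finrank ℝ E - 1 - m)) (Set.Ioo 0 R) :=
    (continuous_pow _).integrableOn_Icc.mono_set Set.Ioo_subset_Icc_self
  refine hpow.congr_fun (fun r hr => ?_) measurableSet_Ioo
  simp only [smul_eq_mul]
  rw [pow_sub₀ r hr.1.ne' (by omega)]

lemma setIntegral_ball_rieszKernel (hm : m < finrank ℝ E) {R : ℝ} (hR : 0 < R) :
    ∫ z in ball (0 : E) R, rieszKernel m z =
      R ^ (finrank ℝ E - m) * ∫ z in ball (0 : E) 1, rieszKernel m z := by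
  have h := Measure.setIntegral_comp_smul_of_pos (volume : Measure E) (rieszKernel m) (ball 0 1) hR
  simp only [_root_.smul_ball hR.ne', smul_zero, Real.norm_of_nonneg hR.le, mul_one,
    rieszKernel_smul hR.le, integral_const_mul, smul_eq_mul] at h
  rw [pow_sub₀ R hR.ne' hm.le, mul_assoc, h, mul_inv_cancel_left₀ (by positivity)]

lemma setIntegral_ball_rieszKernel_pos (hm : m < finrank ℝ E) {R : ℝ} (hR : 0 < R) :
    0 < ∫ z in ball (0 : E) R, rieszKernel m z := by
  have : Nontrivial E := nontrivial_of_finrank_pos (m.zero_le.trans_lt hm)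
  rw [setIntegral_pos_iff_support_of_nonneg_ae (Eventually.of_forall rieszKernel_nonneg)
    (integrableOn_ball_rieszKernel hm R)]
  calc (0 : ENNReal) < volume (ball (0 : E) R \ {0}) := by
        rw [measure_sdiff_null (measure_singleton _)]
        exact measure_ball_pos _ _ hR
    _ ≤ volume (Function.support (rieszKernel m) ∩ ball (0 : E) R) :=
        measure_mono fun z hz => ⟨(rieszKernel_pos hz.2).ne', hz.1⟩

lemma integrable_indicator_ball_rieszKernel (hm : m < finrank ℝ E) (r : ℝ) :
    Integrable ((ball (0 : E) r).indicator (rieszKernel m)) :=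
  (integrable_indicator_iff measurableSet_ball).2 (integrableOn_ball_rieszKernel hm r)

lemma integrableOn_rieszKernel_sub (hm : m < finrank ℝ E) (y : E) {A : Set E}
    (hA : volume A ≠ ⊤) : IntegrableOn (fun z => rieszKernel m (y - z)) A := by
  have hnear : Integrable fun z => (ball (0 : E) 1).indicator (rieszKernel m) (y - z) :=
    (integrable_indicator_ball_rieszKernel hm 1).comp_sub_left y
  have hfar : IntegrableOn (fun _ : E => ((1 : ℝ) ^ m)⁻¹) A := integrableOn_const hA
  refine (hnear.integrableOn.add hfar).mono'
    (measurable_rieszKernel.comp (measurable_const.sub measurable_id)).aestronglyMeasurable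
    (Eventually.of_forall fun z => ?_)
  rw [Real.norm_of_nonneg (rieszKernel_nonneg _)]
  exact rieszKernel_le_indicator_add one_pos _

lemma setIntegral_rieszKernel_sub_le (hm : m < finrank ℝ E) (y : E) {A : Set E}
    (hA : volume A ≠ ⊤) {r : ℝ} (hr : 0 < r) :
    ∫ z in A, rieszKernel m (y - z) ≤
      (∫ z in ball (0 : E) r, rieszKernel m z) + (r ^ m)⁻¹ * volume.real A := by
  have hnear : Integrable fun z => (ball (0 : E) r).indicator (rieszKernel m) (y - z) :=
    (integrable_indicator_ball_rieszKernel hm r).comp_sub_left y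
  have hfar : IntegrableOn (fun _ : E => (r ^ m)⁻¹) A := integrableOn_const hA
  calc ∫ z in A, rieszKernel m (y - z)
      ≤ ∫ z in A, ((ball (0 : E) r).indicator (rieszKernel m) (y - z) + (r ^ m)⁻¹) :=
        setIntegral_mono (integrableOn_rieszKernel_sub hm y hA) (hnear.integrableOn.add hfar)
          fun z => rieszKernel_le_indicator_add hr _
    _ = (∫ z in A, (ball (0 : E) r).indicator (rieszKernel m) (y - z)) + ∫ _ in A, (r ^ m)⁻¹ :=
        integral_add hnear.integrableOn hfar
    _ ≤ (∫ z, (ball (0 : E) r).indicator (rieszKernel m) (y - z)) + ∫ _ in A, (r ^ m)⁻¹ := by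
        refine add_le_add (setIntegral_le_integral hnear (Eventually.of_forall fun z => ?_)) le_rfl
        exact Set.indicator_nonneg (fun z _ => rieszKernel_nonneg z) _
    _ = (∫ z in ball (0 : E) r, rieszKernel m z) + (r ^ m)⁻¹ * volume.real A := by
        rw [integral_sub_left_eq_self ((ball (0 : E) r).indicator (rieszKernel m)) volume y,
          integral_indicator measurableSet_ball, setIntegral_const, smul_eq_mul, mul_comm]

lemma exists_forall_setIntegral_rieszKernel_sub_le (hm : m < finrank ℝ E) {ε : ℝ} (hε : 0 < ε) :
    ∃ δ > (0 : ℝ), ∀ A : Set E, volume A ≤ ENNReal.ofReal δ →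
      ∀ y, ∫ z in A, rieszKernel m (y - z) ≤ ε := by
  obtain ⟨r, hr, hrε⟩ : ∃ r > (0 : ℝ), ∫ z in ball (0 : E) r, rieszKernel m z ≤ ε / 2 := by
    have hlim : Tendsto (fun r : ℝ => r ^ (finrank ℝ E - m) *
        ∫ z in ball (0 : E) 1, rieszKernel m z) (𝓝[>] 0) (𝓝 0) := by
      refine Tendsto.mono_left ?_ nhdsWithin_le_nhds
      have hcont : Continuous fun r : ℝ =>
        r ^ (finrank ℝ E - m) * ∫ z in ball (0 : E) 1, rieszKernel m z := by fun_prop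
      simpa [zero_pow (Nat.sub_pos_of_lt hm).ne'] using hcont.tendsto 0
    obtain ⟨r, hle, hr⟩ :=
      ((hlim.eventually (ge_mem_nhds (half_pos hε))).and self_mem_nhdsWithin).exists
    exact ⟨r, hr, (setIntegral_ball_rieszKernel hm hr).trans_le hle⟩
  refine ⟨ε / 2 * r ^ m, by positivity, fun A hA y => ?_⟩
  have hvol : volume.real A ≤ ε / 2 * r ^ m := ENNReal.toReal_le_of_le_ofReal (by positivity) hA
  calc ∫ z in A, rieszKernel m (y - z)
      ≤ (∫ z in ball (0 : E) r, rieszKernel m z) + (r ^ m)⁻¹ * volume.real A :=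
        setIntegral_rieszKernel_sub_le hm y (ne_top_of_le_ne_top ENNReal.ofReal_ne_top hA) hr
    _ ≤ ε / 2 + (r ^ m)⁻¹ * (ε / 2 * r ^ m) := by gcongr
    _ = ε := by field_simp; norm_num

end RieszKernel

/-! ### Inversion in a sphere as a change of variables -/

section Inversion

variable {E : Type*} [NormedAddCommGroup E]

/-- The punctured open ball, which inversion in its boundary sphere exchanges with the exterior of
the closed ball. -/
def puncturedBall (c : E) (l : ℝ) : Set E := ball c l \ {c}

lemma dist_pos_of_mem_puncturedBall {c y : E} {l : ℝ} (h : y ∈ puncturedBall c l) :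
    0 < dist y c := dist_pos.2 h.2

variable [InnerProductSpace ℝ E]

lemma image_inversion_puncturedBall (c : E) {l : ℝ} (hl : 0 < l) :
    inversion c l '' puncturedBall c l = (closedBall c l)ᶜ := by
  ext y
  simp only [Set.mem_compl_iff, mem_closedBall, not_le]
  constructor
  · rintro ⟨z, hz, rfl⟩
    have hzl : dist z c < l := hz.1
    rw [dist_inversion_center, lt_div_iff₀ (dist_pos_of_mem_puncturedBall hz)]
    nlinarith
  · intro hy
    have hy0 : 0 < dist y c := hl.trans hy
    refine ⟨inversion c l y, ⟨?_, ?_⟩, inversion_inversion c hl.ne' y⟩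
    · rw [mem_ball, dist_inversion_center, div_lt_iff₀ hy0]
      nlinarith
    · rw [Set.mem_singleton_iff, inversion_eq_center hl.ne']
      exact dist_pos.1 hy0

lemma dist_inversion_pos_of_mem_puncturedBall {c y z : E} {l : ℝ} (hl : 0 < l)
    (hy : y ∈ puncturedBall c l) (hz : z ∈ puncturedBall c l) :
    0 < dist (inversion c l y) z := by
  rw [dist_pos]
  rintro h
  have hout : inversion c l y ∈ (closedBall c l)ᶜ :=
    image_inversion_puncturedBall c hl ▸ Set.mem_image_of_mem _ hy
  exact hout (h ▸ ball_subset_closedBall hz.1)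

lemma sq_dist_mul_sq_dist_inversion_sub {c y : E} {l : ℝ} (z : E) (hy : y ≠ c) :
    dist y c ^ 2 * dist (inversion c l y) z ^ 2 - l ^ 2 * dist y z ^ 2 =
      (l ^ 2 - dist y c ^ 2) * (l ^ 2 - dist z c ^ 2) := by
  obtain ⟨a, rfl⟩ : ∃ a, y = a + c := ⟨y - c, by abel⟩
  obtain ⟨b, rfl⟩ : ∃ b, z = b + c := ⟨z - c, by abel⟩
  have ha : ‖a‖ ≠ 0 := by simpa using hy
  have hinv : inversion c l (a + c) = (l / ‖a‖) ^ 2 • a + c := by simp [inversion]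
  rw [hinv, dist_add_right, dist_add_right, dist_eq_norm a b, dist_eq_norm _ b, dist_add_self_left,
    dist_add_self_left, norm_sub_sq_real, norm_sub_sq_real, norm_smul, inner_smul_left]
  simp only [Real.norm_eq_abs, abs_pow, sq_abs, mul_pow, div_pow, abs_div, conj_trivial, abs_norm]
  field_simp
  ring

section ChangeOfVariables

variable [FiniteDimensional ℝ E]

lemma abs_det_fderiv_inversion (c x : E) (l : ℝ) :
    |((l / dist x c) ^ 2 • ((ℝ ∙ (x - c))ᗮ.reflection : E →L[ℝ] E)).det| =
      (l / dist x c) ^ (2 * finrank ℝ E) := by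
  have hdet : ((l / dist x c) ^ 2 • ((ℝ ∙ (x - c))ᗮ.reflection : E →L[ℝ] E)).det =
      ((l / dist x c) ^ 2) ^ finrank ℝ E *
        LinearMap.det ((ℝ ∙ (x - c))ᗮ.reflection).toLinearMap :=
    LinearMap.det_smul _ _
  rw [hdet, Submodule.det_reflection, abs_mul, abs_neg_one_pow, mul_one, ← pow_mul,
    abs_of_nonneg ((even_two_mul _).pow_nonneg _)]

variable [MeasurableSpace E] [BorelSpace E]

lemma measurableSet_puncturedBall (c : E) (l : ℝ) : MeasurableSet (puncturedBall c l) :=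
  measurableSet_ball.diff (measurableSet_singleton c)

lemma volume_puncturedBall [Nontrivial E] (c : E) (l : ℝ) :
    volume (puncturedBall c l) = volume (ball c l) :=
  measure_sdiff_null (measure_singleton c)

lemma puncturedBall_ae_eq_closedBall [Nontrivial E] (c : E) (l : ℝ) :
    (puncturedBall c l : Set E) =ᵐ[volume] closedBall c l := by
  refine (sdiff_null_ae_eq_self (measure_singleton c)).trans ?_
  rw [← closedBall_sdiff_sphere]
  exact sdiff_null_ae_eq_self (Measure.addHaar_sphere _ _ _)

lemma setIntegral_compl_closedBall_eq_inversion (c : E) {l : ℝ} (hl : 0 < l) (F : E → ℝ) :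
    ∫ z in (closedBall c l)ᶜ, F z =
      ∫ z in puncturedBall c l, (l / dist z c) ^ (2 * finrank ℝ E) * F (inversion c l z) := by
  have h := integral_image_eq_integral_abs_det_fderiv_smul (volume : Measure E)
    (measurableSet_puncturedBall c l)
    (fun x hx => (hasFDerivAt_inversion (R := l) hx.2).hasFDerivWithinAt)
    (inversion_injective c hl.ne').injOn F
  rw [image_inversion_puncturedBall c hl] at h
  simpa only [abs_det_fderiv_inversion, smul_eq_mul] using h

lemma integrableOn_compl_closedBall_iff_inversion (c : E) {l : ℝ} (hl : 0 < l) (F : E → ℝ) :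
    IntegrableOn F (closedBall c l)ᶜ ↔
      IntegrableOn (fun z => (l / dist z c) ^ (2 * finrank ℝ E) * F (inversion c l z))
        (puncturedBall c l) := by
  have h := integrableOn_image_iff_integrableOn_abs_det_fderiv_smul (volume : Measure E)
    (measurableSet_puncturedBall c l)
    (fun x hx => (hasFDerivAt_inversion (R := l) hx.2).hasFDerivWithinAt)
    (inversion_injective c hl.ne').injOn F
  rw [image_inversion_puncturedBall c hl] at h
  simpa only [abs_det_fderiv_inversion, smul_eq_mul] using h

lemma integral_eq_setIntegral_puncturedBall_add_inversion [Nontrivial E] (c : E) {l : ℝ}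
    (hl : 0 < l) {F : E → ℝ} (hF : Integrable F) :
    ∫ z, F z = (∫ z in puncturedBall c l, F z) +
      ∫ z in puncturedBall c l, (l / dist z c) ^ (2 * finrank ℝ E) * F (inversion c l z) := by
  rw [setIntegral_congr_set (puncturedBall_ae_eq_closedBall c l),
    ← setIntegral_compl_closedBall_eq_inversion c hl F,
    integral_add_compl measurableSet_closedBall hF]

end ChangeOfVariables

end Inversion

/-! ### The power nonlinearity -/

section PowerMap

variable {ι : Type*} [Fintype ι] {s : ℝ} {V W : EuclideanSpace ℝ ι}

/-- The nonlinearity `|W|^{s-1} W` of the system. -/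
noncomputable def powerMap (s : ℝ) (W : EuclideanSpace ℝ ι) : EuclideanSpace ℝ ι :=
  ‖W‖ ^ (s - 1) • W

lemma powerMap_apply (s : ℝ) (W : EuclideanSpace ℝ ι) (i : ι) :
    powerMap s W i = ‖W‖ ^ (s - 1) * W i := rfl

lemma apply_le_norm (W : EuclideanSpace ℝ ι) (i : ι) : W i ≤ ‖W‖ :=
  (Real.le_norm_self _).trans (PiLp.norm_apply_le W i)

lemma norm_le_norm_of_nonneg_of_le (hV : ∀ i, 0 ≤ V i) (h : ∀ i, V i ≤ W i) : ‖V‖ ≤ ‖W‖ := by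
  rw [EuclideanSpace.norm_eq, EuclideanSpace.norm_eq]
  gcongr with i
  rw [Real.norm_of_nonneg (hV i), Real.norm_of_nonneg ((hV i).trans (h i))]
  exact h i

lemma norm_le_sum_of_nonneg (hW : ∀ i, 0 ≤ W i) : ‖W‖ ≤ ∑ i, W i := by
  rw [EuclideanSpace.norm_eq, Real.sqrt_le_left (Finset.sum_nonneg fun i _ => hW i)]
  simp only [Real.norm_eq_abs, sq_abs]
  exact Finset.sum_sq_le_sq_sum_of_nonneg fun i _ => hW i

lemma powerMap_apply_nonneg {i : ι} (h : 0 ≤ W i) : 0 ≤ powerMap s W i :=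
  mul_nonneg (Real.rpow_nonneg (norm_nonneg _) _) h

lemma powerMap_apply_pos {i : ι} (h : 0 < W i) : 0 < powerMap s W i :=
  mul_pos (Real.rpow_pos_of_pos (h.trans_le (apply_le_norm _ _)) _) h

lemma powerMap_apply_le (hs : 1 < s) {M : ℝ} {i : ι} (hW : 0 ≤ W i) (hM : ‖W‖ ≤ M) :
    powerMap s W i ≤ M ^ s := by
  have hM0 : 0 ≤ M := (norm_nonneg W).trans hM
  calc powerMap s W i ≤ M ^ (s - 1) * M :=
        mul_le_mul (Real.rpow_le_rpow (norm_nonneg _) hM (by linarith))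
          ((apply_le_norm W i).trans hM) hW (Real.rpow_nonneg hM0 _)
    _ = M ^ s := by rw [← Real.rpow_add_one' hM0 (by linarith), sub_add_cancel]

lemma powerMap_apply_mono (hs : 1 < s) (hV : ∀ i, 0 ≤ V i) (h : ∀ i, V i ≤ W i) (i : ι) :
    powerMap s V i ≤ powerMap s W i :=
  mul_le_mul (Real.rpow_le_rpow (norm_nonneg _) (norm_le_norm_of_nonneg_of_le hV h) (by linarith))
    (h i) (hV i) (Real.rpow_nonneg (norm_nonneg _) _)

lemma powerMap_smul {c : ℝ} (hc : 0 < c) (W : EuclideanSpace ℝ ι) :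
    powerMap s (c • W) = c ^ s • powerMap s W := by
  have hcs : c ^ s = c ^ (s - 1) * c := by
    rw [← Real.rpow_add_one hc.ne', sub_add_cancel]
  rw [powerMap, powerMap, norm_smul, Real.norm_of_nonneg hc.le,
    Real.mul_rpow hc.le (norm_nonneg _), hcs, smul_smul, smul_smul]
  congr 1
  ring

lemma continuous_powerMap (hs : 1 < s) :
    Continuous (powerMap s : EuclideanSpace ℝ ι → EuclideanSpace ℝ ι) :=
  (continuous_norm.rpow_const fun _ => Or.inr (by linarith)).smul continuous_id

lemma rpow_sub_rpow_le {a b : ℝ} (hs : 1 < s) (hb : 0 ≤ b) (hba : b ≤ a) :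
    a ^ s - b ^ s ≤ s * a ^ (s - 1) * (a - b) := by
  rcases (hb.trans hba).eq_or_lt with rfl | ha
  · simp [le_antisymm hba hb]
  have bernoulli : 1 + s * (b / a - 1) ≤ (b / a) ^ s := by
    simpa using one_add_mul_self_le_rpow_one_add (s := b / a - 1) (p := s)
      (by linarith [div_nonneg hb ha.le]) hs.le
  rw [Real.div_rpow hb ha.le, le_div_iff₀ (Real.rpow_pos_of_pos ha s)] at bernoulli
  have has : a ^ s = a ^ (s - 1) * a := by rw [← Real.rpow_add_one ha.ne', sub_add_cancel]
  have expand : (1 + s * (b / a - 1)) * a ^ s = a ^ s + s * a ^ (s - 1) * (b - a) := by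
    rw [has]; field_simp
  linarith

lemma powerMap_apply_sub_le_of_le (hs : 1 < s) (hV : ∀ i, 0 ≤ V i) (h : ∀ i, V i ≤ W i) (i : ι) :
    powerMap s W i - powerMap s V i ≤
      ‖W‖ ^ (s - 1) * (W i - V i) + s * ‖W‖ ^ (s - 1) * (‖W‖ - ‖V‖) := by
  have hnorm : ‖V‖ ≤ ‖W‖ := norm_le_norm_of_nonneg_of_le hV h
  have hrpow : ‖V‖ ^ (s - 1) ≤ ‖W‖ ^ (s - 1) :=
    Real.rpow_le_rpow (norm_nonneg _) hnorm (by linarith)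
  have hpow (X : EuclideanSpace ℝ ι) : ‖X‖ ^ s = ‖X‖ ^ (s - 1) * ‖X‖ := by
    rw [← Real.rpow_add_one' (norm_nonneg _) (by linarith), sub_add_cancel]
  calc powerMap s W i - powerMap s V i
      = ‖W‖ ^ (s - 1) * (W i - V i) + (‖W‖ ^ (s - 1) - ‖V‖ ^ (s - 1)) * V i := by
        rw [powerMap_apply, powerMap_apply]; ring
    _ ≤ ‖W‖ ^ (s - 1) * (W i - V i) + (‖W‖ ^ (s - 1) - ‖V‖ ^ (s - 1)) * ‖V‖ := by
        gcongr
        exact apply_le_norm V i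
    _ ≤ ‖W‖ ^ (s - 1) * (W i - V i) + (‖W‖ ^ s - ‖V‖ ^ s) := by
        rw [hpow, hpow, sub_mul]; gcongr
    _ ≤ _ := by
        gcongr; exact rpow_sub_rpow_le hs (norm_nonneg _) hnorm

lemma powerMap_apply_sub_le {M N : ℝ} (hs : 1 < s) (hV : ∀ i, 0 ≤ V i) (hW : ∀ i, 0 ≤ W i)
    (hM : ‖W‖ ≤ M) (hN : 0 ≤ N) (h : ∀ i, W i - V i ≤ N) (i : ι) :
    powerMap s W i - powerMap s V i ≤ (1 + s * Fintype.card ι) * M ^ (s - 1) * N := by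
  -- Only the components with `V i < W i` matter, so `V` may be replaced by the infimum of `V`, `W`.
  set X : EuclideanSpace ℝ ι := WithLp.toLp 2 fun i => min (V i) (W i)
  have hX (i : ι) : 0 ≤ X i := le_min (hV i) (hW i)
  have hXW (i : ι) : X i ≤ W i := min_le_right _ _
  have hdiff (j : ι) : W j - X j ≤ N := by
    rw [sub_le_iff_le_add, ← sub_le_iff_le_add']
    exact le_min (by linarith [h j]) (by linarith)
  have hnorm : ‖W‖ - ‖X‖ ≤ Fintype.card ι * N :=
    calc ‖W‖ - ‖X‖ ≤ ‖W - X‖ := norm_sub_norm_le _ _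
      _ ≤ ∑ j, (W j - X j) := norm_le_sum_of_nonneg fun j => sub_nonneg.2 (hXW j)
      _ ≤ ∑ _j : ι, N := Finset.sum_le_sum fun j _ => hdiff j
      _ = Fintype.card ι * N := by simp
  have hrpow : ‖W‖ ^ (s - 1) ≤ M ^ (s - 1) := Real.rpow_le_rpow (norm_nonneg _) hM (by linarith)
  have hrpow0 : 0 ≤ ‖W‖ ^ (s - 1) := Real.rpow_nonneg (norm_nonneg _) _
  have hM0 : 0 ≤ M ^ (s - 1) := hrpow0.trans hrpow
  have : 0 ≤ s := by linarith
  calc powerMap s W i - powerMap s V i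
      ≤ powerMap s W i - powerMap s X i := by
        gcongr; exact powerMap_apply_mono hs hX (fun i => min_le_left _ _) i
    _ ≤ ‖W‖ ^ (s - 1) * (W i - X i) + s * ‖W‖ ^ (s - 1) * (‖W‖ - ‖X‖) :=
        powerMap_apply_sub_le_of_le hs hX hXW i
    _ ≤ M ^ (s - 1) * N + s * M ^ (s - 1) * (Fintype.card ι * N) := by
        gcongr
        exacts [sub_nonneg.2 (hXW i), hdiff i, sub_nonneg.2 (norm_le_norm_of_nonneg_of_le hX hXW)]
    _ = (1 + s * Fintype.card ι) * M ^ (s - 1) * N := by ring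

end PowerMap

/-! ### Kelvin transforms of Riesz potentials -/

section Kelvin

variable {E : Type*} [NormedAddCommGroup E] [InnerProductSpace ℝ E] {m : ℕ} {c y z : E} {l : ℝ}

/-- The Kelvin transform of `f` in the sphere of centre `c` and radius `l`, with weight `k`. Riesz
potentials with kernel `‖z‖⁻ᵐ` in dimension `d` are transformed with weight `m`, and their densities
with weight `2d - m`. -/
noncomputable def kelvin {F : Type*} [SMul ℝ F] (k : ℕ) (c : E) (l : ℝ) (f : E → F) (y : E) : F :=
  (l / dist y c) ^ k • f (inversion c l y)

/-- The kernel which expresses the difference of a Riesz potential and its Kelvin transform through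
the difference of their densities. -/
noncomputable def movingSphereKernel (m : ℕ) (c : E) (l : ℝ) (y z : E) : ℝ :=
  rieszKernel m (y - z) - (l / dist y c) ^ m * rieszKernel m (inversion c l y - z)

lemma movingSphereKernel_pos (hm : m ≠ 0) (hl : 0 < l) (hy : y ∈ puncturedBall c l)
    (hz : z ∈ puncturedBall c l) (hyz : y ≠ z) : 0 < movingSphereKernel m c l y z := by
  have hy0 := dist_pos_of_mem_puncturedBall hy
  have hyz0 : 0 < dist y z := dist_pos.2 hyz
  have hinv0 := dist_inversion_pos_of_mem_puncturedBall hl hy hz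
  have hprod : 0 < (l ^ 2 - dist y c ^ 2) * (l ^ 2 - dist z c ^ 2) :=
    mul_pos (sub_pos.2 (pow_lt_pow_left₀ hy.1 dist_nonneg two_ne_zero))
      (sub_pos.2 (pow_lt_pow_left₀ hz.1 dist_nonneg two_ne_zero))
  have hdist : l * dist y z < dist y c * dist (inversion c l y) z := by
    refine lt_of_pow_lt_pow_left₀ 2 (by positivity) ?_
    linarith [sq_dist_mul_sq_dist_inversion_sub (l := l) z hy.2, mul_pow l (dist y z) 2,
      mul_pow (dist y c) (dist (inversion c l y) z) 2]
  have hinv : l / dist y c * (dist (inversion c l y) z)⁻¹ < (dist y z)⁻¹ := by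
    rwa [← div_eq_mul_inv, div_div, inv_eq_one_div, div_lt_div_iff₀ (by positivity) hyz0, one_mul]
  rw [movingSphereKernel, rieszKernel_sub, rieszKernel_sub, sub_pos, ← inv_pow, ← inv_pow,
    ← mul_pow]
  exact pow_lt_pow_left₀ hinv (by positivity) hm

lemma movingSphereKernel_le (hl : 0 ≤ l) :
    movingSphereKernel m c l y z ≤ rieszKernel m (y - z) :=
  sub_le_self _ (mul_nonneg (by positivity) (rieszKernel_nonneg _))

lemma mul_rieszKernel_sub_inversion (l : ℝ) (hy : y ≠ c) (hz : z ≠ c) :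
    (l / dist z c) ^ m * rieszKernel m (y - inversion c l z) =
      (l / dist y c) ^ m * rieszKernel m (inversion c l y - z) := by
  rw [rieszKernel_sub, rieszKernel_sub, ← inv_pow, ← inv_pow, ← mul_pow, ← mul_pow,
    ← div_eq_mul_inv, ← div_eq_mul_inv, div_div, div_div, mul_comm (dist z c), mul_comm (dist y c),
    dist_inversion_mul_dist_center_eq hy hz]

lemma div_dist_mul_div_dist_inversion (hl : 0 < l) (hy : y ≠ c) :
    l / dist y c * (l / dist (inversion c l y) c) = 1 := by
  have := dist_pos.2 hy
  rw [dist_inversion_center]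
  field_simp

lemma movingSphereKernel_mul_sub_eq (c : E) (l : ℝ) (y z : E) (a b : ℝ) :
    movingSphereKernel m c l y z * (a - b) =
      (rieszKernel m (y - z) * a + (l / dist y c) ^ m * (rieszKernel m (inversion c l y - z) * b)) -
      ((l / dist y c) ^ m * (rieszKernel m (inversion c l y - z) * a) +
        rieszKernel m (y - z) * b) := by
  unfold movingSphereKernel; ring

lemma mul_rieszKernel_sub_inversion_mul (hm : m < finrank ℝ E) (f : E → ℝ) (hy : y ≠ c)
    (hz : z ≠ c) :
    (l / dist z c) ^ (2 * finrank ℝ E) *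
        (rieszKernel m (y - inversion c l z) * f (inversion c l z)) =
      (l / dist y c) ^ m *
        (rieszKernel m (inversion c l y - z) * kelvin (2 * finrank ℝ E - m) c l f z) := by
  rw [show 2 * finrank ℝ E = m + (2 * finrank ℝ E - m) by omega, pow_add,
    ← mul_assoc _ (rieszKernel m (inversion c l y - z)), ← mul_rieszKernel_sub_inversion l hy hz,
    Nat.add_sub_cancel_left, kelvin, smul_eq_mul]
  ring

variable [FiniteDimensional ℝ E] [MeasurableSpace E] [BorelSpace E]

/-- The Riesz potential of order `finrank ℝ E - m` of the density `f`, unnormalised. -/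
noncomputable def rieszPotential (m : ℕ) (f : E → ℝ) (x : E) : ℝ :=
  ∫ y, rieszKernel m (x - y) * f y

lemma integrableOn_rieszKernel_inversion_mul_kelvin (hm : m < finrank ℝ E) {f : E → ℝ}
    (hl : 0 < l) (hy : y ≠ c) (hf : Integrable fun z => rieszKernel m (y - z) * f z) :
    IntegrableOn (fun z => (l / dist y c) ^ m *
      (rieszKernel m (inversion c l y - z) * kelvin (2 * finrank ℝ E - m) c l f z))
      (puncturedBall c l) :=
  ((integrableOn_compl_closedBall_iff_inversion c hl _).1 hf.integrableOn).congr_fun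
    (fun _ hz => mul_rieszKernel_sub_inversion_mul hm f hy hz.2) (measurableSet_puncturedBall c l)

lemma rieszPotential_eq_setIntegral_puncturedBall (hm : m < finrank ℝ E) {f : E → ℝ}
    (hl : 0 < l) (hy : y ≠ c) (hf : Integrable fun z => rieszKernel m (y - z) * f z) :
    rieszPotential m f y = (∫ z in puncturedBall c l, rieszKernel m (y - z) * f z) +
      ∫ z in puncturedBall c l, (l / dist y c) ^ m *
        (rieszKernel m (inversion c l y - z) * kelvin (2 * finrank ℝ E - m) c l f z) := by
  have : Nontrivial E := nontrivial_of_finrank_pos (m.zero_le.trans_lt hm)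
  rw [rieszPotential, integral_eq_setIntegral_puncturedBall_add_inversion c hl hf]
  congr 1
  exact setIntegral_congr_fun (measurableSet_puncturedBall c l)
    fun z hz => mul_rieszKernel_sub_inversion_mul hm f hy hz.2

section Difference

variable {f : E → ℝ}

lemma integrableOn_rieszKernel_mul_kelvin (hm : m < finrank ℝ E) (hl : 0 < l) (hy : y ≠ c)
    (hf : Integrable fun z => rieszKernel m (inversion c l y - z) * f z) :
    IntegrableOn (fun z => rieszKernel m (y - z) * kelvin (2 * finrank ℝ E - m) c l f z)
      (puncturedBall c l) := by
  have hy' : inversion c l y ≠ c := (inversion_eq_center hl.ne').not.2 hy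
  have h := (integrableOn_rieszKernel_inversion_mul_kelvin hm hl hy' hf).const_mul
    ((l / dist y c) ^ m)
  simpa only [IntegrableOn, ← mul_assoc, ← mul_pow, div_dist_mul_div_dist_inversion hl hy, one_pow,
    one_mul,
    inversion_inversion c hl.ne'] using h

lemma kelvin_rieszPotential_eq (hm : m < finrank ℝ E) (hl : 0 < l) (hy : y ≠ c)
    (hf : Integrable fun z => rieszKernel m (inversion c l y - z) * f z) :
    kelvin m c l (rieszPotential m f) y =
      (∫ z in puncturedBall c l, (l / dist y c) ^ m *
        (rieszKernel m (inversion c l y - z) * f z)) +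
      ∫ z in puncturedBall c l, rieszKernel m (y - z) * kelvin (2 * finrank ℝ E - m) c l f z := by
  have hy' : inversion c l y ≠ c := (inversion_eq_center hl.ne').not.2 hy
  rw [kelvin, smul_eq_mul, rieszPotential_eq_setIntegral_puncturedBall hm hl hy' hf, mul_add,
    ← integral_const_mul, ← integral_const_mul]
  simp only [← mul_assoc, ← mul_pow, div_dist_mul_div_dist_inversion hl hy, one_pow, one_mul,
    inversion_inversion c hl.ne']

lemma integrableOn_movingSphereKernel_mul (hm : m < finrank ℝ E) (hl : 0 < l) (hy : y ≠ c)
    (hf : Integrable fun z => rieszKernel m (y - z) * f z)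
    (hf' : Integrable fun z => rieszKernel m (inversion c l y - z) * f z) :
    IntegrableOn (fun z => movingSphereKernel m c l y z *
      (f z - kelvin (2 * finrank ℝ E - m) c l f z)) (puncturedBall c l) := by
  simp only [movingSphereKernel_mul_sub_eq]
  exact (hf.integrableOn.add (integrableOn_rieszKernel_inversion_mul_kelvin hm hl hy hf)).sub
    ((hf'.const_mul _).integrableOn.add (integrableOn_rieszKernel_mul_kelvin hm hl hy hf'))

lemma rieszPotential_sub_kelvin (hm : m < finrank ℝ E) (hl : 0 < l) (hy : y ≠ c)
    (hf : Integrable fun z => rieszKernel m (y - z) * f z)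
    (hf' : Integrable fun z => rieszKernel m (inversion c l y - z) * f z) :
    rieszPotential m f y - kelvin m c l (rieszPotential m f) y =
      ∫ z in puncturedBall c l, movingSphereKernel m c l y z *
        (f z - kelvin (2 * finrank ℝ E - m) c l f z) := by
  have I₁ := integrableOn_rieszKernel_inversion_mul_kelvin hm hl hy hf
  have I₂ := integrableOn_rieszKernel_mul_kelvin hm hl hy hf'
  have I₃ := (hf'.const_mul ((l / dist y c) ^ m)).integrableOn (s := puncturedBall c l)
  have hsub := integral_sub (hf.integrableOn.add I₁) (I₃.add I₂)
  rw [integral_add' hf.integrableOn I₁, integral_add' I₃ I₂] at hsub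
  simp only [movingSphereKernel_mul_sub_eq]
  rw [rieszPotential_eq_setIntegral_puncturedBall hm hl hy hf,
    kelvin_rieszPotential_eq hm hl hy hf']
  exact hsub.symm

end Difference

end Kelvin

/-! ### Moving spheres -/

section MovingSpheres

variable {E : Type*} [NormedAddCommGroup E] [InnerProductSpace ℝ E] {ι : Type*}
  {m : ℕ} {s κ M l : ℝ} {c y z : E} {U : E → EuclideanSpace ℝ ι}

/-- Exponents which are superlinear and subcritical for the integral operator with kernel `‖z‖⁻ᵐ`
on `E`. -/
structure SubcriticalExponent (E : Type*) [NormedAddCommGroup E] [InnerProductSpace ℝ E] (m : ℕ)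
    (s : ℝ) : Prop where
  pos : 0 < m
  lt_finrank : m < finrank ℝ E
  one_lt : 1 < s
  mul_lt : s * m < 2 * finrank ℝ E - m

lemma SubcriticalExponent.of_lt_div (hE : 5 ≤ finrank ℝ E) (hs₁ : 1 < s)
    (hs₂ : s < ((finrank ℝ E : ℝ) + 4) / ((finrank ℝ E : ℝ) - 4)) :
    SubcriticalExponent E (finrank ℝ E - 4) s where
  pos := by omega
  lt_finrank := by omega
  one_lt := hs₁
  mul_lt := by
    have hdim : (5 : ℝ) ≤ finrank ℝ E := mod_cast hE
    rw [lt_div_iff₀ (by linarith)] at hs₂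
    push_cast [(by omega : 4 ≤ finrank ℝ E)]
    linarith

/-- The sphere of centre `c` and radius `l` is admissible for the moving sphere argument: inside it,
`U` lies below its Kelvin transform. -/
def KelvinDominated (m : ℕ) (c : E) (l : ℝ) (U : E → EuclideanSpace ℝ ι) : Prop :=
  ∀ y ∈ puncturedBall c l, ∀ i, U y i ≤ kelvin m c l U y i

/-- The set of points of the punctured ball at which `KelvinDominated` fails. -/
def kelvinViolationSet (m : ℕ) (c : E) (l : ℝ) (U : E → EuclideanSpace ℝ ι) : Set E :=
  {z ∈ puncturedBall c l | ∃ i, kelvin m c l U z i < U z i}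

lemma kelvinViolationSet_subset : kelvinViolationSet m c l U ⊆ puncturedBall c l :=
  fun _ hz => hz.1

lemma kelvinViolationSet_subset_ball : kelvinViolationSet m c l U ⊆ ball c l :=
  kelvinViolationSet_subset.trans Set.sdiff_subset

lemma kelvin_apply_nonneg (hl : 0 ≤ l) (hU : ∀ x i, 0 ≤ U x i) (i : ι) :
    0 ≤ kelvin m c l U y i :=
  mul_nonneg (by positivity) (hU _ i)

lemma continuous_kelvin_radius_apply (hU : Continuous U) (m : ℕ) (c y : E) (i : ι) :
    Continuous fun l => kelvin m c l U y i := by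
  have hinv : Continuous fun l : ℝ => inversion c l y := by
    simp only [inversion, vsub_eq_sub, vadd_eq_add]
    fun_prop
  have hweight : Continuous fun l : ℝ => (l / dist y c) ^ m := by fun_prop
  have hUi : Continuous fun x => U x i := by fun_prop
  exact hweight.mul (hUi.comp hinv)

lemma measurableSet_kelvinViolationSet [FiniteDimensional ℝ E] [MeasurableSpace E] [BorelSpace E]
    [Countable ι] (hU : Continuous U) (m : ℕ) (c : E) (l : ℝ) :
    MeasurableSet (kelvinViolationSet m c l U) := by
  have hinv : Measurable (inversion c l : E → E) := by
    unfold inversion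
    simp only [vsub_eq_sub, vadd_eq_add]
    fun_prop
  have hcoord (i : ι) : Measurable fun y => U y i := Continuous.measurable (by fun_prop)
  have hkelvin (i : ι) : Measurable fun y => kelvin m c l U y i := by
    have hweight : Measurable fun y => (l / dist y c) ^ m := by fun_prop
    exact hweight.mul ((hcoord i).comp hinv)
  have hset : kelvinViolationSet m c l U =
      puncturedBall c l ∩ ⋃ i, {z | kelvin m c l U z i < U z i} := by
    ext; simp [kelvinViolationSet]
  rw [hset]
  exact (measurableSet_puncturedBall c l).inter
    (.iUnion fun i => measurableSet_lt (hkelvin i) (hcoord i))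

variable [Fintype ι]

namespace SubcriticalExponent

lemma pow_rpow_lt (hs : SubcriticalExponent E m s) {r : ℝ} (hr : 1 < r) :
    (r ^ m) ^ s < r ^ (2 * finrank ℝ E - m) := by
  rw [← Real.rpow_natCast, ← Real.rpow_natCast, ← Real.rpow_mul (by linarith)]
  refine Real.rpow_lt_rpow_of_exponent_lt hr ?_
  have := hs.lt_finrank
  rw [Nat.cast_sub (by omega)]
  push_cast
  linarith [hs.mul_lt]

lemma powerMap_kelvin_lt (hs : SubcriticalExponent E m s) (hl : 0 < l)
    (hz : z ∈ puncturedBall c l) {i : ι} (hU : ∀ x, 0 < U x i) :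
    powerMap s (kelvin m c l U z) i <
      kelvin (2 * finrank ℝ E - m) c l (fun x => powerMap s (U x) i) z := by
  have hz0 := dist_pos_of_mem_puncturedBall hz
  rw [kelvin, powerMap_smul (by positivity)]
  exact mul_lt_mul_of_pos_right (hs.pow_rpow_lt ((one_lt_div hz0).2 hz.1))
    (powerMap_apply_pos (hU _))

lemma powerMap_kelvin_le (hs : SubcriticalExponent E m s) (hl : 0 < l)
    (hz : z ∈ puncturedBall c l) {i : ι} (hU : ∀ x, 0 ≤ U x i) :
    powerMap s (kelvin m c l U z) i ≤
      kelvin (2 * finrank ℝ E - m) c l (fun x => powerMap s (U x) i) z := by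
  have hz0 := dist_pos_of_mem_puncturedBall hz
  rw [kelvin, powerMap_smul (by positivity)]
  exact mul_le_mul_of_nonneg_right (hs.pow_rpow_lt ((one_lt_div hz0).2 hz.1)).le
    (powerMap_apply_nonneg (hU _))

end SubcriticalExponent

variable [FiniteDimensional ℝ E] [MeasurableSpace E] [BorelSpace E]

/-- Nonnegative solutions, bounded by `M`, of the integral equation `κ U = I (|U|^{s-1} U)`, with
`I` the Riesz potential of kernel `‖z‖⁻ᵐ`. -/
structure RieszSolution (m : ℕ) (s κ M : ℝ) (U : E → EuclideanSpace ℝ ι) : Prop where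
  const_pos : 0 < κ
  continuous : Continuous U
  nonneg : ∀ x i, 0 ≤ U x i
  norm_le : ∀ x, ‖U x‖ ≤ M
  integrable : ∀ x i, Integrable fun y => rieszKernel m (x - y) * powerMap s (U y) i
  mul_eq_rieszPotential : ∀ x i,
    κ * U x i = rieszPotential m (fun y => powerMap s (U y) i) x

namespace RieszSolution

lemma bound_nonneg (hU : RieszSolution m s κ M U) : 0 ≤ M :=
  (norm_nonneg _).trans (hU.norm_le 0)

lemma integrableOn_movingSphereKernel_mul (hU : RieszSolution m s κ M U) (hm : m < finrank ℝ E)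
    (hl : 0 < l) (hy : y ∈ puncturedBall c l) (i : ι) :
    IntegrableOn (fun z => movingSphereKernel m c l y z * (powerMap s (U z) i -
      kelvin (2 * finrank ℝ E - m) c l (fun x => powerMap s (U x) i) z)) (puncturedBall c l) :=
  BiharmonicSystem.integrableOn_movingSphereKernel_mul hm hl hy.2 (hU.integrable _ i)
    (hU.integrable _ i)

lemma mul_sub_kelvin_eq (hU : RieszSolution m s κ M U) (hm : m < finrank ℝ E)
    (hl : 0 < l) (hy : y ∈ puncturedBall c l) (i : ι) :
    κ * (U y i - kelvin m c l U y i) =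
      ∫ z in puncturedBall c l, movingSphereKernel m c l y z * (powerMap s (U z) i -
        kelvin (2 * finrank ℝ E - m) c l (fun x => powerMap s (U x) i) z) := by
  rw [← rieszPotential_sub_kelvin hm hl hy.2 (hU.integrable _ i) (hU.integrable _ i), kelvin,
    kelvin, smul_eq_mul, ← hU.mul_eq_rieszPotential, ← hU.mul_eq_rieszPotential, PiLp.smul_apply,
    smul_eq_mul]
  ring

lemma movingSphereKernel_mul_le_indicator (hU : RieszSolution m s κ M U)
    (hs : SubcriticalExponent E m s) (hl : 0 < l) (hy : y ∈ puncturedBall c l)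
    (hz : z ∈ puncturedBall c l) (hyz : y ≠ z) {N : ℝ} (hN : 0 ≤ N)
    (hb : ∀ i, U z i - kelvin m c l U z i ≤ N) (i : ι) :
    movingSphereKernel m c l y z * (powerMap s (U z) i -
        kelvin (2 * finrank ℝ E - m) c l (fun x => powerMap s (U x) i) z) ≤
      (kelvinViolationSet m c l U).indicator
        (fun z => rieszKernel m (y - z) * ((1 + s * Fintype.card ι) * M ^ (s - 1) * N)) z := by
  have hker := (movingSphereKernel_pos hs.pos.ne' hl hy hz hyz).le
  have hkelvin := hs.powerMap_kelvin_le hl hz (hU.nonneg · i)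
  have hkelvin0 := kelvin_apply_nonneg (m := m) (c := c) (y := z) hl.le hU.nonneg
  by_cases hzv : z ∈ kelvinViolationSet m c l U
  · have hlip := powerMap_apply_sub_le hs.one_lt hkelvin0 (hU.nonneg z) (hU.norm_le z) hN hb i
    have hs0 : 0 ≤ s := by linarith [hs.one_lt]
    have hM0 := hU.bound_nonneg
    rw [Set.indicator_of_mem hzv]
    calc _ ≤ movingSphereKernel m c l y z * ((1 + s * Fintype.card ι) * M ^ (s - 1) * N) := by
          gcongr; linarith
      _ ≤ _ := by gcongr; exact movingSphereKernel_le hl.le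
  · have hdom (j : ι) : U z j ≤ kelvin m c l U z j := not_lt.1 fun h => hzv ⟨hz, j, h⟩
    rw [Set.indicator_of_notMem hzv]
    refine mul_nonpos_of_nonneg_of_nonpos hker (sub_nonpos.2 ?_)
    exact (powerMap_apply_mono hs.one_lt (hU.nonneg z) hdom i).trans hkelvin

lemma mul_sub_kelvin_le (hU : RieszSolution m s κ M U) (hs : SubcriticalExponent E m s)
    (hl : 0 < l) {N : ℝ} (hN : 0 ≤ N)
    (hb : ∀ y ∈ puncturedBall c l, ∀ i, U y i - kelvin m c l U y i ≤ N)
    (hy : y ∈ puncturedBall c l) (i : ι) :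
    κ * (U y i - kelvin m c l U y i) ≤ (∫ z in kelvinViolationSet m c l U, rieszKernel m (y - z)) *
      ((1 + s * Fintype.card ι) * M ^ (s - 1) * N) := by
  have : Nontrivial E := nontrivial_of_finrank_pos (hs.pos.trans hs.lt_finrank)
  have hmeas := measurableSet_kelvinViolationSet hU.continuous m c l
  have hfin : volume (kelvinViolationSet m c l U) ≠ ⊤ :=
    measure_ne_top_of_subset kelvinViolationSet_subset_ball measure_ball_lt_top.ne
  have hint := (integrableOn_rieszKernel_sub hs.lt_finrank y hfin).mul_const
    ((1 + s * Fintype.card ι) * M ^ (s - 1) * N)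
  have hindicator := setIntegral_mono_on_ae
    (hU.integrableOn_movingSphereKernel_mul hs.lt_finrank hl hy i)
    ((integrable_indicator_iff hmeas).2 hint).integrableOn (measurableSet_puncturedBall c l)
    ((Measure.ae_ne volume y).mono fun z hzy hz =>
      hU.movingSphereKernel_mul_le_indicator hs hl hy hz hzy.symm hN (hb z hz) i)
  rwa [setIntegral_indicator hmeas, Set.inter_eq_right.2 kelvinViolationSet_subset,
    integral_mul_const, ← hU.mul_sub_kelvin_eq hs.lt_finrank hl hy i] at hindicator

lemma sub_kelvin_le_half (hU : RieszSolution m s κ M U) (hs : SubcriticalExponent E m s)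
    (hl : 0 < l) {N : ℝ} (hN : 0 ≤ N)
    (hsmall : ∀ y, ∫ z in kelvinViolationSet m c l U, rieszKernel m (y - z) ≤
      κ / (2 * ((1 + s * Fintype.card ι) * M ^ (s - 1) + 1)))
    (hb : ∀ y ∈ puncturedBall c l, ∀ i, U y i - kelvin m c l U y i ≤ N) :
    ∀ y ∈ puncturedBall c l, ∀ i, U y i - kelvin m c l U y i ≤ N / 2 := by
  intro y hy i
  have hM0 := hU.bound_nonneg
  have hs0 : 0 ≤ s := by linarith [hs.one_lt]
  have hκ := hU.const_pos
  refine le_of_mul_le_mul_left ?_ hκ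
  calc κ * (U y i - kelvin m c l U y i)
      ≤ (∫ z in kelvinViolationSet m c l U, rieszKernel m (y - z)) *
          ((1 + s * Fintype.card ι) * M ^ (s - 1) * N) := hU.mul_sub_kelvin_le hs hl hN hb hy i
    _ ≤ κ / (2 * ((1 + s * Fintype.card ι) * M ^ (s - 1) + 1)) *
          (((1 + s * Fintype.card ι) * M ^ (s - 1) + 1) * N) := by
        gcongr
        exacts [hsmall y, by linarith]
    _ = κ * (N / 2) := by field_simp

lemma exists_kelvinDominated_of_volume_le (hU : RieszSolution m s κ M U)
    (hs : SubcriticalExponent E m s) :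
    ∃ δ > (0 : ℝ), ∀ (c : E) (l : ℝ), 0 < l →
      volume (kelvinViolationSet m c l U) ≤ ENNReal.ofReal δ → KelvinDominated m c l U := by
  have hM0 := hU.bound_nonneg
  have hs0 : 0 ≤ s := by linarith [hs.one_lt]
  have hκ := hU.const_pos
  obtain ⟨δ, hδ, hsmall⟩ := exists_forall_setIntegral_rieszKernel_sub_le (E := E) hs.lt_finrank
    (ε := κ / (2 * ((1 + s * Fintype.card ι) * M ^ (s - 1) + 1))) (by positivity)
  refine ⟨δ, hδ, fun c l hl hvol y hy i => ?_⟩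
  have hgeom (k : ℕ) : ∀ y ∈ puncturedBall c l, ∀ i,
      U y i - kelvin m c l U y i ≤ M * (1 / 2) ^ k := by
    induction k with
    | zero =>
      intro y _ i
      linarith [(apply_le_norm (U y) i).trans (hU.norm_le y),
        kelvin_apply_nonneg (m := m) (c := c) (y := y) hl.le hU.nonneg i]
    | succ k ih =>
      have := hU.sub_kelvin_le_half hs hl (by positivity) (hsmall _ hvol) ih
      simpa only [pow_succ, mul_one_div, mul_div_assoc] using this
  have hlim : Tendsto (fun k : ℕ => M * (1 / 2 : ℝ) ^ k) atTop (𝓝 (M * 0)) :=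
    (tendsto_pow_atTop_nhds_zero_of_lt_one (by norm_num) (by norm_num)).const_mul M
  linarith [ge_of_tendsto' hlim fun k => hgeom k y hy i]

lemma forall_pos_or_forall_eq_zero (hU : RieszSolution m s κ M U) (hs : SubcriticalExponent E m s)
    (i : ι) : (∀ x, 0 < U x i) ∨ ∀ x, U x i = 0 := by
  have : Nontrivial E := nontrivial_of_finrank_pos (hs.pos.trans hs.lt_finrank)
  refine or_iff_not_imp_left.2 fun h x' => ?_
  push Not at h
  obtain ⟨x, hx⟩ := h
  have hpot : ∫ y, rieszKernel m (x - y) * powerMap s (U y) i = 0 := by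
    rw [← rieszPotential, ← hU.mul_eq_rieszPotential, hx.antisymm (hU.nonneg x i), mul_zero]
  have hae := (integral_eq_zero_iff_of_nonneg (fun y => mul_nonneg (rieszKernel_nonneg _)
    (powerMap_apply_nonneg (hU.nonneg y i))) (hU.integrable x i)).1 hpot
  have hpot' : rieszPotential m (fun y => powerMap s (U y) i) x' = 0 := by
    refine integral_eq_zero_of_ae ?_
    filter_upwards [hae, Measure.ae_ne volume x] with y hy hyx
    rw [(mul_eq_zero.1 hy).resolve_left (rieszKernel_pos (sub_ne_zero.2 hyx.symm)).ne', mul_zero,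
      Pi.zero_apply]
  rw [← hU.mul_eq_rieszPotential] at hpot'
  exact (mul_eq_zero.1 hpot').resolve_left hU.const_pos.ne'

lemma lt_kelvin_of_kelvinDominated (hU : RieszSolution m s κ M U) (hs : SubcriticalExponent E m s)
    (hl : 0 < l) (hdom : KelvinDominated m c l U) {i : ι} (hpos : ∀ x, 0 < U x i)
    (hy : y ∈ puncturedBall c l) : U y i < kelvin m c l U y i := by
  have : Nontrivial E := nontrivial_of_finrank_pos (hs.pos.trans hs.lt_finrank)
  set F : E → ℝ := fun z => movingSphereKernel m c l y z * (powerMap s (U z) i -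
    kelvin (2 * finrank ℝ E - m) c l (fun x => powerMap s (U x) i) z)
  have hneg {z : E} (hz : z ∈ puncturedBall c l) (hzy : z ≠ y) : F z < 0 :=
    mul_neg_of_pos_of_neg (movingSphereKernel_pos hs.pos.ne' hl hy hz hzy.symm) <| sub_neg.2 <|
      (powerMap_apply_mono hs.one_lt (hU.nonneg z) (hdom z hz) i).trans_lt
        (hs.powerMap_kelvin_lt hl hz hpos)
  have hsupp : puncturedBall c l \ {y} ⊆ (Function.support fun z => -F z) ∩ puncturedBall c l :=
    fun z hz => ⟨neg_ne_zero.2 (hneg hz.1 hz.2).ne, hz.1⟩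
  have hint : 0 < ∫ z in puncturedBall c l, -F z := by
    have hF : IntegrableOn (fun z => -F z) (puncturedBall c l) :=
      (hU.integrableOn_movingSphereKernel_mul hs.lt_finrank hl hy i).neg
    rw [setIntegral_pos_iff_support_of_nonneg_ae ?_ hF]
    · refine lt_of_lt_of_le ?_ (measure_mono hsupp)
      rw [measure_sdiff_null (measure_singleton y), volume_puncturedBall]
      exact measure_ball_pos _ _ hl
    · filter_upwards [ae_restrict_mem (measurableSet_puncturedBall c l),
        ae_restrict_of_ae (Measure.ae_ne volume y)] with z hz hzy
      exact (neg_pos.2 (hneg hz hzy)).le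
  rw [integral_neg, ← hU.mul_sub_kelvin_eq hs.lt_finrank hl hy i, neg_pos] at hint
  exact sub_neg.1 (neg_of_mul_neg_right hint hU.const_pos.le)

end RieszSolution

end MovingSpheres

/-! ### The Liouville theorem for the integral equation -/

section Liouville

variable {E : Type*} [NormedAddCommGroup E] [InnerProductSpace ℝ E]

lemma mem_puncturedBall_and_inversion_eq {a b : E} (hab : a ≠ b) {T : ℝ} (hT : 0 < T) :
    a ∈ puncturedBall (a + T • (a - b)) (√((T + 1) / T) * dist a (a + T • (a - b))) ∧
      inversion (a + T • (a - b)) (√((T + 1) / T) * dist a (a + T • (a - b))) a = b := by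
  have hd : 0 < dist a (a + T • (a - b)) := by
    simpa [hT.ne', sub_eq_zero] using hab
  have hsqrt : 1 < √((T + 1) / T) := by
    rw [Real.lt_sqrt zero_le_one, one_pow, one_lt_div hT]
    linarith
  refine ⟨⟨lt_mul_of_one_lt_left hd hsqrt, dist_pos.1 hd⟩, ?_⟩
  rw [inversion, mul_div_cancel_right₀ _ hd.ne', Real.sq_sqrt (by positivity), vsub_eq_sub,
    vadd_eq_add, show a - (a + T • (a - b)) = T • (b - a) by module, smul_smul,
    div_mul_cancel₀ _ hT.ne']
  module

/-- As `T → ∞`, the spheres with centre `a + T (a - b)` which interchange `a` and `b` converge to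
the reflection hyperplane of `a` and `b`, and the Kelvin weight at `a` converges to `1`. -/
lemma le_of_forall_le_kelvin {m : ℕ} {f : E → ℝ}
    (h : ∀ (c : E) (l : ℝ), 0 < l → ∀ y ∈ puncturedBall c l, f y ≤ kelvin m c l f y) (a b : E) :
    f a ≤ f b := by
  rcases eq_or_ne a b with rfl | hab
  · rfl
  have hle {T : ℝ} (hT : 0 < T) : f a ≤ √((T + 1) / T) ^ m * f b := by
    obtain ⟨hmem, hinv⟩ := mem_puncturedBall_and_inversion_eq hab hT
    have hd := dist_pos_of_mem_puncturedBall hmem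
    have := h _ _ (by positivity) a hmem
    rwa [kelvin, hinv, mul_div_cancel_right₀ _ hd.ne', smul_eq_mul] at this
  have hratio : Tendsto (fun T : ℝ => (T + 1) / T) atTop (𝓝 1) := by
    have : Tendsto (fun T : ℝ => 1 + T⁻¹) atTop (𝓝 (1 + 0)) := tendsto_inv_atTop_zero.const_add 1
    rw [add_zero] at this
    refine this.congr' ?_
    filter_upwards [eventually_gt_atTop 0] with T hT
    field_simp
  have hlim := (hratio.sqrt.pow m).mul_const (f b)
  rw [Real.sqrt_one, one_pow, one_mul] at hlim
  exact ge_of_tendsto hlim ((eventually_gt_atTop 0).mono fun T hT => hle hT)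

variable {ι : Type*} {m : ℕ} {s κ M l : ℝ} {c : E} {U : E → EuclideanSpace ℝ ι}

lemma isClosed_setOf_kelvinDominated (hU : Continuous U) (m : ℕ) (c : E) :
    IsClosed {l : Set.Ioi (0 : ℝ) | KelvinDominated m c l U} := by
  rw [← isOpen_compl_iff, isOpen_iff_mem_nhds]
  rintro ⟨l, hl⟩ hdom
  simp only [Set.mem_compl_iff, Set.mem_ofPred_eq, KelvinDominated, not_forall, not_le] at hdom
  obtain ⟨y, hy, i, hlt⟩ := hdom
  have hcont := continuous_kelvin_radius_apply hU m c y i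
  have hev := (hcont.continuousAt.eventually (gt_mem_nhds hlt)).and (lt_mem_nhds hy.1)
  exact (continuousAt_subtype_val.eventually hev).mono fun r hr hdom =>
    hr.1.not_ge (hdom y ⟨hr.2, hy.2⟩ i)

variable [FiniteDimensional ℝ E] [MeasurableSpace E] [BorelSpace E] [Fintype ι]

lemma tendsto_volume_ball_nhdsGT_zero (hE : 0 < finrank ℝ E) (c : E) :
    Tendsto (fun l => volume (ball c l)) (𝓝[>] 0) (𝓝 0) := by
  have hlim : Tendsto (fun l : ℝ => ENNReal.ofReal (l ^ finrank ℝ E) * volume (ball (0 : E) 1))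
      (𝓝[>] 0) (𝓝 (ENNReal.ofReal (0 ^ finrank ℝ E) * volume (ball (0 : E) 1))) :=
    ENNReal.Tendsto.mul_const (((ENNReal.continuous_ofReal.comp
      (continuous_pow _)).tendsto 0).mono_left nhdsWithin_le_nhds)
      (Or.inr measure_ball_lt_top.ne)
  rw [zero_pow hE.ne', ENNReal.ofReal_zero, zero_mul] at hlim
  refine hlim.congr' (eventually_nhdsWithin_of_forall fun l hl => ?_)
  have : Nontrivial E := nontrivial_of_finrank_pos hE
  exact (Measure.addHaar_ball volume c (le_of_lt hl)).symm

namespace RieszSolution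

lemma eventually_notMem_kelvinViolationSet (hU : RieszSolution m s κ M U)
    (hs : SubcriticalExponent E m s) (hl : 0 < l) (hdom : KelvinDominated m c l U) {z : E}
    (hzc : z ≠ c) (hzl : dist z c ≠ l) : ∀ᶠ t in 𝓝 l, z ∉ kelvinViolationSet m c t U := by
  rcases hzl.lt_or_gt with hlt | hgt
  · have hle : ∀ᶠ t in 𝓝 l, ∀ i, U z i ≤ kelvin m c t U z i := by
      refine eventually_all.2 fun i => ?_
      rcases hU.forall_pos_or_forall_eq_zero hs i with hpos | hzero
      · have hlt := hU.lt_kelvin_of_kelvinDominated hs hl hdom hpos ⟨hlt, hzc⟩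
        have hcont := continuous_kelvin_radius_apply hU.continuous m c z i
        exact (hcont.continuousAt.eventually (lt_mem_nhds hlt)).mono fun t ht => le_of_lt ht
      · filter_upwards [lt_mem_nhds hl] with t ht
        exact (hzero z).trans_le (kelvin_apply_nonneg ht.le hU.nonneg i)
    filter_upwards [hle] with t ht
    rintro ⟨-, i, hi⟩
    exact hi.not_ge (ht i)
  · filter_upwards [gt_mem_nhds hgt] with t ht hz
    exact ht.not_gt hz.1.1

lemma tendsto_volume_kelvinViolationSet (hU : RieszSolution m s κ M U)
    (hs : SubcriticalExponent E m s) (hl : 0 < l) (hdom : KelvinDominated m c l U) :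
    Tendsto (fun t => volume (kelvinViolationSet m c t U)) (𝓝 l) (𝓝 0) := by
  have : Nontrivial E := nontrivial_of_finrank_pos (hs.pos.trans hs.lt_finrank)
  have hmeas (t : ℝ) := measurableSet_kelvinViolationSet hU.continuous m c t
  have hlim : Tendsto (fun t => ∫⁻ z, (kelvinViolationSet m c t U).indicator 1 z) (𝓝 l)
      (𝓝 (∫⁻ _ : E, 0)) := by
    refine tendsto_lintegral_filter_of_dominated_convergence ((ball c (l + 1)).indicator 1)
      (.of_forall fun t => measurable_one.indicator (hmeas t)) ?_ ?_ ?_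
    · filter_upwards [gt_mem_nhds (lt_add_one l)] with t ht
      exact .of_forall fun z => Set.indicator_le_indicator_of_subset
        (kelvinViolationSet_subset_ball.trans (ball_subset_ball ht.le)) (fun _ => zero_le) z
    · rw [lintegral_indicator_one measurableSet_ball]
      exact measure_ball_lt_top.ne
    · have hsphere : ∀ᵐ z : E, z ∉ sphere c l :=
        measure_eq_zero_iff_ae_notMem.1 (Measure.addHaar_sphere volume c l)
      filter_upwards [Measure.ae_ne volume c, hsphere] with z hzc hzl
      refine tendsto_const_nhds.congr' ?_
      filter_upwards [hU.eventually_notMem_kelvinViolationSet hs hl hdom hzc hzl] with t ht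
      exact (Set.indicator_of_notMem ht 1).symm
  simpa only [lintegral_indicator_one (hmeas _), lintegral_zero] using hlim

lemma isOpen_setOf_kelvinDominated (hU : RieszSolution m s κ M U)
    (hs : SubcriticalExponent E m s) (c : E) :
    IsOpen {l : Set.Ioi (0 : ℝ) | KelvinDominated m c l U} := by
  obtain ⟨δ, hδ, hsmall⟩ := hU.exists_kelvinDominated_of_volume_le hs
  rw [isOpen_iff_mem_nhds]
  rintro ⟨l, hl⟩ hdom
  have hev := (hU.tendsto_volume_kelvinViolationSet hs hl hdom).eventually
    (ge_mem_nhds (ENNReal.ofReal_pos.2 hδ))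
  exact (continuousAt_subtype_val.eventually hev).mono fun r hr => hsmall c r r.2 hr

lemma exists_kelvinDominated (hU : RieszSolution m s κ M U) (hs : SubcriticalExponent E m s)
    (c : E) : ∃ l > 0, KelvinDominated m c l U := by
  obtain ⟨δ, hδ, hsmall⟩ := hU.exists_kelvinDominated_of_volume_le hs
  obtain ⟨l, hvol, hl⟩ := (((tendsto_volume_ball_nhdsGT_zero (hs.pos.trans hs.lt_finrank)
    c).eventually (ge_mem_nhds (ENNReal.ofReal_pos.2 hδ))).and self_mem_nhdsWithin).exists
  exact ⟨l, hl, hsmall c l hl ((measure_mono kelvinViolationSet_subset_ball).trans hvol)⟩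

lemma kelvinDominated (hU : RieszSolution m s κ M U) (hs : SubcriticalExponent E m s) (c : E)
    (hl : 0 < l) : KelvinDominated m c l U := by
  have : PreconnectedSpace (Set.Ioi (0 : ℝ)) :=
    isPreconnected_iff_preconnectedSpace.1 isPreconnected_Ioi
  obtain ⟨l₀, hl₀, hdom⟩ := hU.exists_kelvinDominated hs c
  have huniv := IsClopen.eq_univ
    ⟨isClosed_setOf_kelvinDominated hU.continuous m c, hU.isOpen_setOf_kelvinDominated hs c⟩
    ⟨⟨l₀, hl₀⟩, hdom⟩
  exact huniv.ge (Set.mem_univ (⟨l, hl⟩ : Set.Ioi (0 : ℝ)))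

lemma eq_of_subcritical (hU : RieszSolution m s κ M U) (hs : SubcriticalExponent E m s)
    (a b : E) : U a = U b := by
  have hle (a b : E) (i : ι) : U a i ≤ U b i :=
    le_of_forall_le_kelvin (f := fun x => U x i)
      (fun c _ hl y hy => hU.kelvinDominated hs c hl y hy i) a b
  ext i
  exact (hle a b i).antisymm (hle b a i)

/-- `U` is constant, and a nonzero constant density has no finite Riesz potential. -/
theorem eq_zero_of_subcritical (hU : RieszSolution m s κ M U) (hs : SubcriticalExponent E m s)
    (x : E) : U x = 0 := by
  ext i
  by_contra hne
  have hpos : 0 < powerMap s (U x) i := powerMap_apply_pos ((hU.nonneg x i).lt_of_ne' hne)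
  have hconst (y : E) : powerMap s (U y) i = powerMap s (U x) i := by
    rw [hU.eq_of_subcritical hs y x]
  have hint := hU.integrable 0 i
  simp only [hconst, rieszKernel_sub_comm (0 : E), sub_zero] at hint
  have hball {R : ℝ} (hR : 0 < R) : R ^ (finrank ℝ E - m) *
      ((∫ z in ball (0 : E) 1, rieszKernel m z) * powerMap s (U x) i) ≤ κ * U 0 i := by
    rw [← mul_assoc, ← setIntegral_ball_rieszKernel hs.lt_finrank hR, ← integral_mul_const,
      hU.mul_eq_rieszPotential, rieszPotential]
    simp only [hconst, rieszKernel_sub_comm (0 : E), sub_zero]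
    exact setIntegral_le_integral hint
      (.of_forall fun z => mul_nonneg (rieszKernel_nonneg z) hpos.le)
  have hlim : Tendsto (fun R : ℝ => R ^ (finrank ℝ E - m) *
      ((∫ z in ball (0 : E) 1, rieszKernel m z) * powerMap s (U x) i)) atTop atTop :=
    (tendsto_pow_atTop (Nat.sub_pos_of_lt hs.lt_finrank).ne').atTop_mul_const
      (mul_pos (setIntegral_ball_rieszKernel_pos hs.lt_finrank one_pos) hpos)
  obtain ⟨R, hlt, hR⟩ := ((hlim.eventually_gt_atTop _).and (eventually_gt_atTop 0)).exists
  exact hlt.not_ge (hball hR)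

end RieszSolution

end Liouville

/-! ### Laplacian and bi-Laplacian -/

section Laplacian

open Laplacian

variable {E : Type*} [NormedAddCommGroup E]

lemma continuous_mul_of_tsupport {ψ g : E → ℝ} (hψ : Continuous ψ)
    (hg : ∀ x ∈ tsupport ψ, ContinuousAt g x) : Continuous fun x => ψ x * g x :=
  continuous_of_tsupport fun _ hx =>
    hψ.continuousAt.mul (hg _ (tsupport_mul_subset_left hx))

lemma contDiff_mul_of_tsupport [NormedSpace ℝ E] {ψ g : E → ℝ} {k : WithTop ℕ∞}
    (hψ : ContDiff ℝ k ψ) (hg : ∀ x ∈ tsupport ψ, ContDiffAt ℝ k g x) :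
    ContDiff ℝ k fun x => ψ x * g x := by
  rw [contDiff_iff_contDiffAt]
  intro x
  by_cases hx : x ∈ tsupport ψ
  · exact hψ.contDiffAt.mul (hg x hx)
  · refine contDiffAt_const (c := 0) |>.congr_of_eventuallyEq ?_
    filter_upwards [notMem_tsupport_iff_eventuallyEq.1 hx] with y hy
    simp [hy]

lemma fderiv_const_smul_comp_add_smul {F : Type*} [NormedSpace ℝ E] [NormedAddCommGroup F]
    [NormedSpace ℝ F] (c R : ℝ) (f : E → F) (x : E) :
    fderiv ℝ (fun y => c • f (x + R • y)) = fun z => (c * R) • fderiv ℝ f (x + R • z) := by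
  funext z
  have hcomp : fderiv ℝ (fun y => f (x + R • y)) z = R • fderiv ℝ f (x + R • z) := by
    rw [fderiv_comp_smul (f := fun y => f (x + y)), fderiv_comp_add_left]
  rw [mul_smul, ← hcomp]
  exact congrFun (fderiv_const_smul_field (f := fun y => f (x + R • y)) c) z

variable [InnerProductSpace ℝ E] {f g : E → ℝ} {x : E}

lemma fderiv_fderiv_apply (hf : ContDiffAt ℝ 2 f x) (v : E) :
    fderiv ℝ (fun y => fderiv ℝ f y v) x v = fderiv ℝ (fderiv ℝ f) x v v := by
  have hd : DifferentiableAt ℝ (fderiv ℝ f) x :=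
    (hf.fderiv_right (m := 1) (by norm_num)).differentiableAt one_ne_zero
  rw [fderiv_clm_apply hd (differentiableAt_const v)]
  simp

variable [FiniteDimensional ℝ E]

lemma laplacian_eq_sum_fderiv_fderiv {ι : Type*} [Fintype ι] (b : OrthonormalBasis ι ℝ E)
    (f : E → ℝ) (x : E) : Δ f x = ∑ i, fderiv ℝ (fderiv ℝ f) x (b i) (b i) := by
  simp [InnerProductSpace.laplacian_eq_iteratedFDeriv_orthonormalBasis f b,
    iteratedFDeriv_two_apply]

lemma laplacian_eq_sum_fderiv {ι : Type*} [Fintype ι] (b : OrthonormalBasis ι ℝ E)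
    (hf : ContDiffAt ℝ 2 f x) :
    Δ f x = ∑ i, fderiv ℝ (fun y => fderiv ℝ f y (b i)) x (b i) := by
  simp only [laplacian_eq_sum_fderiv_fderiv b, fderiv_fderiv_apply hf]

lemma contDiffAt_laplacian {k : WithTop ℕ∞} (hf : ContDiffAt ℝ (k + 2) f x) :
    ContDiffAt ℝ k (Δ f) x := by
  have hf₂ : ContDiffAt ℝ k (fderiv ℝ (fderiv ℝ f)) x :=
    (hf.fderiv_right (m := k + 1) (by rw [add_assoc, one_add_one_eq_two])).fderiv_right le_rfl
  rw [funext (laplacian_eq_sum_fderiv_fderiv (stdOrthonormalBasis ℝ E) f)]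
  exact ContDiffAt.sum fun i _ => (hf₂.clm_apply contDiffAt_const).clm_apply contDiffAt_const

lemma contDiffAt_two_laplacian (hf : ContDiffAt ℝ 4 f x) : ContDiffAt ℝ 2 (Δ f) x :=
  contDiffAt_laplacian (hf.of_le (by norm_num))

lemma continuousAt_bilaplacian (hf : ContDiffAt ℝ 4 f x) : ContinuousAt (Δ (Δ f)) x :=
  (contDiffAt_laplacian (k := 0) ((contDiffAt_two_laplacian hf).of_le (by norm_num))).continuousAt

lemma continuous_bilaplacian (hf : ContDiff ℝ 4 f) : Continuous (Δ (Δ f)) :=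
  continuous_iff_continuousAt.2 fun _ => continuousAt_bilaplacian hf.contDiffAt

lemma bilaplacian_congr (h : f =ᶠ[𝓝 x] g) : Δ (Δ f) x = Δ (Δ g) x :=
  (InnerProductSpace.laplacian_congr_nhds (InnerProductSpace.laplacian_congr_nhds h)).eq_of_nhds

lemma tsupport_laplacian_subset (f : E → ℝ) : tsupport (Δ f) ⊆ tsupport f := by
  refine closure_minimal (fun x hx => ?_) (isClosed_tsupport f)
  contrapose! hx
  have h : f =ᶠ[𝓝 x] fun _ => 0 := notMem_tsupport_iff_eventuallyEq.1 hx
  simpa using (InnerProductSpace.laplacian_congr_nhds h).eq_of_nhds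

lemma tsupport_bilaplacian_subset (f : E → ℝ) : tsupport (Δ (Δ f)) ⊆ tsupport f :=
  (tsupport_laplacian_subset _).trans (tsupport_laplacian_subset f)

lemma laplacian_const_mul_add_const_mul {a b : ℝ} (hf : ContDiffAt ℝ 2 f x)
    (hg : ContDiffAt ℝ 2 g x) :
    Δ (fun y => a * f y + b * g y) x = a * Δ f x + b * Δ g x := by
  have hadd := ContDiffAt.laplacian_add (contDiffAt_const (c := a) |>.mul hf)
    (contDiffAt_const (c := b) |>.mul hg)
  have hsmul {c : ℝ} {h : E → ℝ} (hh : ContDiffAt ℝ 2 h x) :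
      Δ (fun y => c * h y) x = c * Δ h x := InnerProductSpace.laplacian_smul c hh
  rwa [hsmul hf, hsmul hg] at hadd

lemma laplacian_const_mul_comp_add_smul (c R : ℝ) (f : E → ℝ) (x z : E) :
    Δ (fun y => c * f (x + R • y)) z = c * R ^ 2 * Δ f (x + R • z) := by
  have hsecond : fderiv ℝ (fderiv ℝ fun y => c * f (x + R • y)) z
      = (c * R ^ 2) • fderiv ℝ (fderiv ℝ f) (x + R • z) := by
    have hfirst := fderiv_const_smul_comp_add_smul c R f x
    simp only [smul_eq_mul] at hfirst
    rw [hfirst, fderiv_const_smul_comp_add_smul (c * R) R (fderiv ℝ f) x, mul_assoc, ← sq]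
  simp [laplacian_eq_sum_fderiv_fderiv (stdOrthonormalBasis ℝ E), hsecond, Finset.mul_sum]

lemma bilaplacian_const_mul_comp_add_smul (c R : ℝ) (f : E → ℝ) (x z : E) :
    Δ (Δ fun y => c * f (x + R • y)) z = c * R ^ 4 * Δ (Δ f) (x + R • z) := by
  rw [funext (laplacian_const_mul_comp_add_smul c R f x), laplacian_const_mul_comp_add_smul]
  ring

end Laplacian

section IntegrationByParts

open Laplacian

variable {E : Type*} [NormedAddCommGroup E] [InnerProductSpace ℝ E] [FiniteDimensional ℝ E]
  [MeasurableSpace E] [BorelSpace E] {g ψ : E → ℝ}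

lemma integrable_mul_of_tsupport (hψ : Continuous ψ) (hc : HasCompactSupport ψ)
    (hg : ∀ x ∈ tsupport ψ, ContinuousAt g x) : Integrable fun x => ψ x * g x :=
  (continuous_mul_of_tsupport hψ hg).integrable_of_hasCompactSupport hc.mul_right

lemma integral_mul_fderiv_eq_neg (hψ : ContDiff ℝ 1 ψ) (hc : HasCompactSupport ψ)
    (hg : ∀ x ∈ tsupport ψ, ContDiffAt ℝ 1 g x) (v : E) :
    ∫ x, ψ x * fderiv ℝ g x v = -∫ x, fderiv ℝ ψ x v * g x := by
  have hsub : tsupport (fun x => fderiv ℝ ψ x v) ⊆ tsupport ψ := tsupport_fderiv_apply_subset ℝ v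
  refine integral_mul_fderiv_eq_neg_fderiv_mul_of_integrable ?_ ?_ ?_
    (fun x _ => hψ.differentiable one_ne_zero x)
    (fun x hx => (hg x hx).differentiableAt one_ne_zero)
  · exact integrable_mul_of_tsupport ((hψ.continuous_fderiv one_ne_zero).clm_apply
      continuous_const) (hc.fderiv_apply ℝ v) fun x hx => (hg x (hsub hx)).continuousAt
  · exact integrable_mul_of_tsupport hψ.continuous hc fun x hx =>
      (((hg x hx).fderiv_right (m := 0) le_rfl).clm_apply contDiffAt_const).continuousAt
  · exact integrable_mul_of_tsupport hψ.continuous hc fun x hx => (hg x hx).continuousAt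

lemma integral_mul_fderiv_fderiv (hψ : ContDiff ℝ 2 ψ) (hc : HasCompactSupport ψ)
    (hg : ∀ x ∈ tsupport ψ, ContDiffAt ℝ 2 g x) (v : E) :
    ∫ x, ψ x * fderiv ℝ (fun y => fderiv ℝ g y v) x v
      = ∫ x, fderiv ℝ (fun y => fderiv ℝ ψ y v) x v * g x := by
  have hsub : tsupport (fun x => fderiv ℝ ψ x v) ⊆ tsupport ψ := tsupport_fderiv_apply_subset ℝ v
  have hψ' : ContDiff ℝ 1 fun x => fderiv ℝ ψ x v :=
    (hψ.fderiv_right (by norm_num)).clm_apply contDiff_const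
  rw [integral_mul_fderiv_eq_neg (hψ.of_le one_le_two) hc (fun x hx =>
      ((hg x hx).fderiv_right (by norm_num)).clm_apply contDiffAt_const),
    integral_mul_fderiv_eq_neg hψ' (hc.fderiv_apply ℝ v)
      (fun x hx => (hg x (hsub hx)).of_le one_le_two), neg_neg]

theorem integral_mul_laplacian (hψ : ContDiff ℝ 2 ψ) (hc : HasCompactSupport ψ)
    (hg : ∀ x ∈ tsupport ψ, ContDiffAt ℝ 2 g x) :
    ∫ x, ψ x * Δ g x = ∫ x, Δ ψ x * g x := by
  let b := stdOrthonormalBasis ℝ E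
  have hleft (x : E) :
      ψ x * Δ g x = ∑ i, ψ x * fderiv ℝ (fun y => fderiv ℝ g y (b i)) x (b i) := by
    by_cases hx : x ∈ tsupport ψ
    · rw [laplacian_eq_sum_fderiv b (hg x hx), Finset.mul_sum]
    · simp [image_eq_zero_of_notMem_tsupport hx]
  have hright (x : E) :
      Δ ψ x * g x = ∑ i, fderiv ℝ (fun y => fderiv ℝ ψ y (b i)) x (b i) * g x := by
    rw [laplacian_eq_sum_fderiv b hψ.contDiffAt, Finset.sum_mul]
  simp only [hleft, hright]
  rw [integral_finsetSum, integral_finsetSum]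
  · exact Finset.sum_congr rfl fun i _ => integral_mul_fderiv_fderiv hψ hc hg (b i)
  · intro i _
    have hψ' : ContDiff ℝ 1 fun y => fderiv ℝ ψ y (b i) :=
      (hψ.fderiv_right (by norm_num)).clm_apply contDiff_const
    refine integrable_mul_of_tsupport ((hψ'.continuous_fderiv one_ne_zero).clm_apply
      continuous_const) ((hc.fderiv_apply ℝ _).fderiv_apply ℝ _) fun x hx => ?_
    exact (hg x (tsupport_fderiv_apply_subset ℝ _
      (tsupport_fderiv_apply_subset ℝ _ hx))).continuousAt
  · intro i _
    have hg' (x : E) (hx : x ∈ tsupport ψ) :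
        ContDiffAt ℝ 1 (fun y => fderiv ℝ g y (b i)) x :=
      ((hg x hx).fderiv_right (by norm_num)).clm_apply contDiffAt_const
    exact integrable_mul_of_tsupport hψ.continuous hc fun x hx =>
      (((hg' x hx).fderiv_right (m := 0) le_rfl).clm_apply contDiffAt_const).continuousAt

theorem integral_mul_bilaplacian (hψ : ContDiff ℝ 4 ψ) (hc : HasCompactSupport ψ)
    (hg : ∀ x ∈ tsupport ψ, ContDiffAt ℝ 4 g x) :
    ∫ x, ψ x * Δ (Δ g) x = ∫ x, Δ (Δ ψ) x * g x := by
  have hsub := tsupport_laplacian_subset ψ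
  rw [integral_mul_laplacian (hψ.of_le (by norm_num)) hc
      fun x hx => contDiffAt_two_laplacian (hg x hx),
    integral_mul_laplacian
      (contDiff_iff_contDiffAt.2 fun x => contDiffAt_two_laplacian hψ.contDiffAt)
      (hc.mono' ((subset_tsupport _).trans hsub))
      fun x hx => (hg x (hsub hx)).of_le (by norm_num)]

end IntegrationByParts

section PowerOfShiftedNormSq

open Laplacian

variable {E : Type*} [NormedAddCommGroup E] {ε : ℝ} {x : E}

lemma eventually_add_norm_sq_pos (hx : 0 < ε + ‖x‖ ^ 2) : ∀ᶠ y in 𝓝 x, 0 < ε + ‖y‖ ^ 2 :=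
  (by fun_prop : Continuous fun y : E => ε + ‖y‖ ^ 2).tendsto x |>.eventually (lt_mem_nhds hx)

variable [InnerProductSpace ℝ E]

lemma contDiffAt_add_norm_sq_rpow (b : ℝ) (hx : 0 < ε + ‖x‖ ^ 2) {k : WithTop ℕ∞} :
    ContDiffAt ℝ k (fun y : E => (ε + ‖y‖ ^ 2) ^ b) x :=
  (contDiffAt_const.add (contDiff_norm_sq ℝ).contDiffAt).rpow_const_of_ne hx.ne'

lemma hasFDerivAt_add_norm_sq_rpow (b : ℝ) (hx : 0 < ε + ‖x‖ ^ 2) :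
    HasFDerivAt (fun y : E => (ε + ‖y‖ ^ 2) ^ b)
      ((2 * b * (ε + ‖x‖ ^ 2) ^ (b - 1)) • innerSL ℝ x) x := by
  have h := (((hasStrictFDerivAt_norm_sq x).hasFDerivAt.const_add ε).rpow_const (p := b)
    (Or.inl hx.ne'))
  convert h using 1
  ext v
  simp
  ring

lemma fderiv_fderiv_add_norm_sq_rpow (b : ℝ) (hx : 0 < ε + ‖x‖ ^ 2) (v : E) :
    fderiv ℝ (fun y => fderiv ℝ (fun z : E => (ε + ‖z‖ ^ 2) ^ b) y v) x v
      = 2 * b * (ε + ‖x‖ ^ 2) ^ (b - 1) * ‖v‖ ^ 2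
        + 4 * b * (b - 1) * (ε + ‖x‖ ^ 2) ^ (b - 2) * inner ℝ x v ^ 2 := by
  have hfirst : (fun y => fderiv ℝ (fun z : E => (ε + ‖z‖ ^ 2) ^ b) y v) =ᶠ[𝓝 x]
      fun y => 2 * b * ((ε + ‖y‖ ^ 2) ^ (b - 1) * innerSL ℝ v y) := by
    filter_upwards [eventually_add_norm_sq_pos hx] with y hy
    rw [(hasFDerivAt_add_norm_sq_rpow b hy).fderiv]
    simp [real_inner_comm, mul_assoc]
  have hsecond := ((hasFDerivAt_add_norm_sq_rpow (b - 1) hx).fun_mul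
    (innerSL ℝ v).hasFDerivAt).const_mul (2 * b)
  rw [hfirst.fderiv_eq, hsecond.fderiv]
  simp [real_inner_comm, show b - 1 - 1 = b - 2 by ring]
  ring

variable [FiniteDimensional ℝ E]

theorem laplacian_add_norm_sq_rpow (b : ℝ) (hx : 0 < ε + ‖x‖ ^ 2) :
    Δ (fun y : E => (ε + ‖y‖ ^ 2) ^ b) x
      = 2 * b * (2 * (b - 1) + finrank ℝ E) * (ε + ‖x‖ ^ 2) ^ (b - 1)
        - 4 * b * (b - 1) * ε * (ε + ‖x‖ ^ 2) ^ (b - 2) := by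
  have hpow : (ε + ‖x‖ ^ 2) ^ (b - 1) = (ε + ‖x‖ ^ 2) ^ (b - 2) * (ε + ‖x‖ ^ 2) := by
    rw [← Real.rpow_add_one hx.ne']
    ring_nf
  rw [laplacian_eq_sum_fderiv (stdOrthonormalBasis ℝ E) (contDiffAt_add_norm_sq_rpow b hx)]
  simp only [fderiv_fderiv_add_norm_sq_rpow b hx, OrthonormalBasis.norm_eq_one, one_pow, mul_one,
    Finset.sum_add_distrib, ← Finset.mul_sum, OrthonormalBasis.sum_sq_inner_left,
    Finset.sum_const, Finset.card_univ, Fintype.card_fin, nsmul_eq_mul]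
  rw [hpow]
  ring

theorem bilaplacian_add_norm_sq_rpow {m : ℕ} (hE : finrank ℝ E = m + 4) (hx : 0 < ε + ‖x‖ ^ 2) :
    Δ (Δ fun y : E => (ε + ‖y‖ ^ 2) ^ (-(m / 2 : ℝ))) x
      = m * (m + 2) * (m + 4) * (m + 6) * ε ^ 2 * (ε + ‖x‖ ^ 2) ^ (-(m / 2 : ℝ) - 4) := by
  set b : ℝ := -(m / 2) with hb
  have hd : (finrank ℝ E : ℝ) = -2 * b + 4 := by rw [hE, hb]; push_cast; ring
  have hm : (m : ℝ) = -2 * b := by rw [hb]; ring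
  have hlap : (Δ fun y : E => (ε + ‖y‖ ^ 2) ^ b) =ᶠ[𝓝 x]
      fun y => 4 * b * (ε + ‖y‖ ^ 2) ^ (b - 1)
        + -4 * b * (b - 1) * ε * (ε + ‖y‖ ^ 2) ^ (b - 2) := by
    filter_upwards [eventually_add_norm_sq_pos hx] with y hy
    rw [laplacian_add_norm_sq_rpow b hy, hd]
    ring
  rw [(InnerProductSpace.laplacian_congr_nhds hlap).eq_of_nhds, laplacian_const_mul_add_const_mul
      (contDiffAt_add_norm_sq_rpow _ hx) (contDiffAt_add_norm_sq_rpow _ hx),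
    laplacian_add_norm_sq_rpow _ hx, laplacian_add_norm_sq_rpow _ hx, hd, hm,
    show b - 1 - 1 = b - 2 by ring, show b - 1 - 2 = b - 3 by ring,
    show b - 2 - 1 = b - 3 by ring, show b - 2 - 2 = b - 4 by ring]
  ring

end PowerOfShiftedNormSq

/-! ### The fundamental solution of the bi-Laplacian -/

section FundamentalSolution

open Laplacian

variable {E : Type*} [NormedAddCommGroup E] {m : ℕ}

/-- The function `Δ² (1 + ‖·‖²) ^ (-m/2)` in dimension `m + 4`; its rescalings are the bi-Laplacians
of smooth approximations of the Riesz kernel, and concentrate at the origin. -/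
noncomputable def concentratingDensity (m : ℕ) (w : E) : ℝ :=
  m * (m + 2) * (m + 4) * (m + 6) * (1 + ‖w‖ ^ 2) ^ (-(m / 2 : ℝ) - 4)

lemma concentratingDensity_nonneg (m : ℕ) (w : E) : 0 ≤ concentratingDensity m w := by
  unfold concentratingDensity; positivity

lemma concentratingDensity_pos (hm : 0 < m) (w : E) : 0 < concentratingDensity m w := by
  unfold concentratingDensity; positivity

lemma continuous_concentratingDensity (m : ℕ) :
    Continuous (concentratingDensity m : E → ℝ) :=
  continuous_const.mul (Continuous.rpow_const (by fun_prop) fun w => Or.inl (by positivity))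

lemma rieszKernel_eq_rpow {y : E} (hy : y ≠ 0) :
    rieszKernel m y = (0 + ‖y‖ ^ 2) ^ (-(m / 2 : ℝ)) := by
  rw [zero_add, Real.rpow_neg (by positivity), ← Real.rpow_natCast_mul (norm_nonneg y),
    Nat.cast_ofNat, mul_div_cancel₀ (m : ℝ) two_ne_zero, Real.rpow_natCast, rieszKernel]

lemma add_norm_sq_rpow_le_rieszKernel (m : ℕ) {ε : ℝ} (hε : 0 ≤ ε) {y : E} (hy : y ≠ 0) :
    (ε + ‖y‖ ^ 2) ^ (-(m / 2 : ℝ)) ≤ rieszKernel m y := by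
  have := norm_pos_iff.2 hy
  rw [rieszKernel_eq_rpow hy]
  exact Real.rpow_le_rpow_of_nonpos (by positivity) (by gcongr) (neg_nonpos.2 (by positivity))

variable [InnerProductSpace ℝ E]

lemma contDiffAt_rieszKernel {k : WithTop ℕ∞} {y : E} (hy : y ≠ 0) :
    ContDiffAt ℝ k (rieszKernel m) y := by
  have hpos : 0 < 0 + ‖y‖ ^ 2 := by have := norm_pos_iff.2 hy; positivity
  refine (contDiffAt_add_norm_sq_rpow (-(m / 2 : ℝ)) hpos).congr_of_eventuallyEq ?_
  filter_upwards [isOpen_ne.mem_nhds hy] with z hz using rieszKernel_eq_rpow hz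

variable [FiniteDimensional ℝ E] [MeasurableSpace E] [BorelSpace E]

/-- The constant `κ` for which `Δ² ‖·‖⁻ᵐ` is `κ` times the Dirac mass at the origin in
dimension `m + 4`. -/
noncomputable def biharmonicConst (E : Type*) [NormedAddCommGroup E] [InnerProductSpace ℝ E]
    [FiniteDimensional ℝ E] [MeasurableSpace E] [BorelSpace E] (m : ℕ) : ℝ :=
  ∫ w : E, concentratingDensity m w

lemma integrable_concentratingDensity (hE : finrank ℝ E = m + 4) :
    Integrable (concentratingDensity m : E → ℝ) := by
  have hdim : (finrank ℝ E : ℝ) < m + 8 := by rw [hE]; push_cast; linarith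
  refine ((integrable_rpow_neg_one_add_norm_sq hdim).const_mul
    ((m : ℝ) * (m + 2) * (m + 4) * (m + 6))).congr (Eventually.of_forall fun w => ?_)
  simp only [concentratingDensity]
  ring_nf

theorem biharmonicConst_pos (hm : 0 < m) (hE : finrank ℝ E = m + 4) : 0 < biharmonicConst E m :=
  integral_pos_of_integrable_nonneg_nonzero (x := 0) (continuous_concentratingDensity m)
    (integrable_concentratingDensity hE) (concentratingDensity_nonneg m)
    (concentratingDensity_pos hm 0).ne'

lemma integral_rpow_mul_bilaplacian (hE : finrank ℝ E = m + 4) {v : E → ℝ}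
    (hv : ContDiff ℝ 4 v) (hc : HasCompactSupport v) {δ : ℝ} (hδ : 0 < δ) :
    ∫ y, (δ ^ 2 + ‖y‖ ^ 2) ^ (-(m / 2 : ℝ)) * Δ (Δ v) y
      = ∫ w, concentratingDensity m w * v (δ • w) := by
  have hpos (y : E) : 0 < δ ^ 2 + ‖y‖ ^ 2 := by positivity
  have hparts := integral_mul_bilaplacian hv hc
    fun y _ => contDiffAt_add_norm_sq_rpow (-(m / 2 : ℝ)) (hpos y)
  have hscale (w : E) : v (δ • w) * Δ (Δ fun y : E => (δ ^ 2 + ‖y‖ ^ 2) ^ (-(m / 2 : ℝ))) (δ • w)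
      = (δ ^ (m + 4))⁻¹ * (concentratingDensity m w * v (δ • w)) := by
    have hpow : (δ ^ 2 + ‖δ • w‖ ^ 2) ^ (-(m / 2 : ℝ) - 4)
        = (δ ^ (m + 8))⁻¹ * (1 + ‖w‖ ^ 2) ^ (-(m / 2 : ℝ) - 4) := by
      have hexp : ((2 : ℕ) : ℝ) * (-(m / 2 : ℝ) - 4) = -((m + 8 : ℕ) : ℝ) := by push_cast; ring
      rw [norm_smul, Real.norm_of_nonneg hδ.le, mul_pow, ← mul_one_add,
        Real.mul_rpow (by positivity) (by positivity), ← Real.rpow_natCast_mul hδ.le, hexp,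
        Real.rpow_neg hδ.le, Real.rpow_natCast]
    rw [bilaplacian_add_norm_sq_rpow hE (hpos _), hpow, concentratingDensity]
    field_simp
    ring
  have hchange := Measure.integral_comp_smul_of_nonneg (volume : Measure E)
    (fun y => v y * Δ (Δ fun y : E => (δ ^ 2 + ‖y‖ ^ 2) ^ (-(m / 2 : ℝ))) y) δ (hR := hδ.le)
  simp only [hscale, integral_const_mul, hE, smul_eq_mul] at hchange
  rw [mul_right_injective₀ (by positivity) hchange, hparts]
  exact integral_congr_ae (Eventually.of_forall fun y => mul_comm _ _)

lemma integrable_rieszKernel_mul (hm : m < finrank ℝ E) {h : E → ℝ} (hh : Continuous h)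
    (hc : HasCompactSupport h) : Integrable fun y => rieszKernel m y * h y := by
  have hloc : LocallyIntegrable (rieszKernel m : E → ℝ) := fun x =>
    ⟨ball 0 (‖x‖ + 1), isOpen_ball.mem_nhds (by simp), integrableOn_ball_rieszKernel hm _⟩
  exact hloc.integrable_smul_right_of_hasCompactSupport hh hc

lemma tendsto_integral_rpow_mul [Nontrivial E] (hm : m < finrank ℝ E) {h : E → ℝ}
    (hh : Continuous h) (hc : HasCompactSupport h) :
    Tendsto (fun δ : ℝ => ∫ y, (δ ^ 2 + ‖y‖ ^ 2) ^ (-(m / 2 : ℝ)) * h y) (𝓝[>] 0)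
      (𝓝 (∫ y, rieszKernel m y * h y)) := by
  have hne : ∀ᵐ y : E, y ≠ 0 := by simp [ae_iff]
  refine tendsto_integral_filter_of_dominated_convergence (fun y => ‖rieszKernel m y * h y‖) ?_ ?_
    (integrable_rieszKernel_mul hm hh hc).norm ?_
  · filter_upwards with δ
    exact (Measurable.mul (by fun_prop) hh.measurable).aestronglyMeasurable
  · filter_upwards with δ
    filter_upwards [hne] with y hy
    rw [norm_mul, norm_mul, Real.norm_of_nonneg (by positivity),
      Real.norm_of_nonneg (rieszKernel_nonneg y)]
    gcongr
    exact add_norm_sq_rpow_le_rieszKernel m (sq_nonneg δ) hy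
  · filter_upwards [hne] with y hy
    have hcont : ContinuousAt (fun δ : ℝ => (δ ^ 2 + ‖y‖ ^ 2) ^ (-(m / 2 : ℝ))) 0 :=
      ContinuousAt.rpow_const (by fun_prop) (Or.inl (by simpa using hy))
    have hlim := hcont.tendsto.mono_left (nhdsWithin_le_nhds (s := Set.Ioi 0))
    rw [zero_pow two_ne_zero, ← rieszKernel_eq_rpow hy] at hlim
    exact hlim.mul_const _

lemma tendsto_integral_concentratingDensity_mul (hE : finrank ℝ E = m + 4) {v : E → ℝ}
    (hv : Continuous v) (hc : HasCompactSupport v) :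
    Tendsto (fun δ : ℝ => ∫ w, concentratingDensity m w * v (δ • w)) (𝓝[>] 0)
      (𝓝 (biharmonicConst E m * v 0)) := by
  obtain ⟨B, hB⟩ := hc.exists_bound_of_continuous hv
  rw [biharmonicConst, ← integral_mul_const]
  refine tendsto_integral_filter_of_dominated_convergence (fun w => concentratingDensity m w * B)
    ?_ ?_ ((integrable_concentratingDensity hE).mul_const B) ?_
  · filter_upwards with δ
    exact ((continuous_concentratingDensity m).mul
      (hv.comp (continuous_const_smul δ))).aestronglyMeasurable
  · filter_upwards with δ
    filter_upwards with w
    rw [norm_mul, Real.norm_of_nonneg (concentratingDensity_nonneg m w)]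
    exact mul_le_mul_of_nonneg_left (hB _) (concentratingDensity_nonneg m w)
  · filter_upwards with w
    have hcont : Continuous fun δ : ℝ => concentratingDensity m w * v (δ • w) := by fun_prop
    simpa using (hcont.tendsto 0).mono_left (nhdsWithin_le_nhds (s := Set.Ioi 0))

theorem biharmonicConst_mul_apply_zero (hE : finrank ℝ E = m + 4) {v : E → ℝ}
    (hv : ContDiff ℝ 4 v) (hc : HasCompactSupport v) :
    biharmonicConst E m * v 0 = ∫ y, rieszKernel m y * Δ (Δ v) y := by
  have : Nontrivial E := nontrivial_of_finrank_pos (by omega : 0 < finrank ℝ E)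
  have hΔc : HasCompactSupport (Δ (Δ v)) :=
    hc.mono' ((subset_tsupport _).trans (tsupport_bilaplacian_subset v))
  refine tendsto_nhds_unique (tendsto_integral_concentratingDensity_mul hE hv.continuous hc) ?_
  refine (tendsto_integral_rpow_mul (by omega) (continuous_bilaplacian hv) hΔc).congr' ?_
  filter_upwards [self_mem_nhdsWithin] with δ hδ
    using integral_rpow_mul_bilaplacian hE hv hc hδ

end FundamentalSolution

/-! ### The local representation formula -/

section RepresentationFormula

open Laplacian

variable {E : Type*} [NormedAddCommGroup E] {m : ℕ}

/-- A smooth cutoff with `cutoff = 1` for `‖y‖² ≤ 1/2` and `cutoff = 0` for `1 ≤ ‖y‖`. -/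
noncomputable def cutoff (y : E) : ℝ := Real.smoothTransition (2 - 2 * ‖y‖ ^ 2)

lemma cutoff_nonneg (y : E) : 0 ≤ cutoff y := Real.smoothTransition.nonneg _

lemma cutoff_le_one (y : E) : cutoff y ≤ 1 := Real.smoothTransition.le_one _

lemma cutoff_eq_one {y : E} (h : ‖y‖ ^ 2 ≤ 1 / 2) : cutoff y = 1 :=
  Real.smoothTransition.one_of_one_le (by linarith)

lemma cutoff_eq_zero {y : E} (h : 1 ≤ ‖y‖) : cutoff y = 0 :=
  Real.smoothTransition.zero_of_nonpos (by nlinarith)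

lemma continuous_cutoff : Continuous (cutoff : E → ℝ) :=
  Real.smoothTransition.continuous.comp (by fun_prop)

lemma tsupport_cutoff_subset : tsupport (cutoff : E → ℝ) ⊆ closedBall 0 1 := by
  refine closure_minimal (fun y hy => ?_) isClosed_closedBall
  rw [mem_closedBall_zero_iff]
  exact le_of_not_ge fun h => hy (cutoff_eq_zero h)

/-- The Riesz kernel with its tail at infinity cut off. -/
noncomputable def cutoffKernel (m : ℕ) (z : E) : ℝ := cutoff z * rieszKernel m z

lemma cutoffKernel_eq_zero {z : E} (hz : z ∉ closedBall (0 : E) 1) : cutoffKernel m z = 0 := by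
  rw [mem_closedBall_zero_iff, not_le] at hz
  rw [cutoffKernel, cutoff_eq_zero hz.le, zero_mul]

/-- The Riesz kernel with its singularity at the origin cut off, inside the region where
`cutoff = 1`. -/
noncomputable def truncatedKernel (m : ℕ) (z : E) : ℝ :=
  Real.smoothTransition (4 * ‖z‖ ^ 2 - 1) * rieszKernel m z

lemma truncatedKernel_eq_rieszKernel {z : E} (hz : 1 / 2 ≤ ‖z‖ ^ 2) :
    truncatedKernel m z = rieszKernel m z := by
  rw [truncatedKernel, Real.smoothTransition.one_of_one_le (by linarith), one_mul]

variable [InnerProductSpace ℝ E]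

lemma contDiff_cutoff {k : ℕ∞} : ContDiff ℝ k (cutoff : E → ℝ) :=
  Real.smoothTransition.contDiff.comp
    (contDiff_const.sub (contDiff_const.mul (contDiff_norm_sq ℝ)))

lemma contDiff_truncatedKernel {k : ℕ∞} : ContDiff ℝ k (truncatedKernel m : E → ℝ) := by
  rw [contDiff_iff_contDiffAt]
  intro y
  rcases eq_or_ne y 0 with rfl | hy
  · have hnear : ∀ᶠ z : E in 𝓝 0, ‖z‖ ^ 2 < 1 / 4 :=
      (by fun_prop : Continuous fun z : E => ‖z‖ ^ 2).tendsto' 0 0 (by simp)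
        |>.eventually_lt_const (by norm_num)
    refine (contDiffAt_const (c := 0)).congr_of_eventuallyEq ?_
    filter_upwards [hnear] with z hz
    rw [truncatedKernel, Real.smoothTransition.zero_of_nonpos (by linarith), zero_mul]
  · exact (Real.smoothTransition.contDiff.comp ((contDiff_const.mul (contDiff_norm_sq ℝ)).sub
      contDiff_const)).contDiffAt.mul (contDiffAt_rieszKernel hy)

lemma contDiff_cutoff_mul_truncatedKernel :
    ContDiff ℝ 4 fun y : E => cutoff y * truncatedKernel m y :=
  (contDiff_cutoff (k := 4)).mul (contDiff_truncatedKernel (k := 4))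

variable [FiniteDimensional ℝ E]

lemma hasCompactSupport_cutoff : HasCompactSupport (cutoff : E → ℝ) :=
  (isCompact_closedBall (0 : E) 1).of_isClosed_subset (isClosed_tsupport _) tsupport_cutoff_subset

/-- The smooth kernel `χ Δ² Q - Δ² (χ Q)` produced by the commutator of `Δ²` with the cutoff `χ`,
where `Q` is the truncated kernel. -/
noncomputable def remainderKernel (m : ℕ) (z : E) : ℝ :=
  cutoff z * Δ (Δ (truncatedKernel m : E → ℝ)) z
    - Δ (Δ fun y : E => cutoff y * truncatedKernel m y) z

lemma remainderKernel_eq_zero {z : E} (hz : z ∉ closedBall (0 : E) 1) :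
    remainderKernel m z = 0 := by
  have hχ : z ∉ tsupport (cutoff : E → ℝ) := fun h => hz (tsupport_cutoff_subset h)
  have hχQ : z ∉ tsupport (Δ (Δ fun y : E => cutoff y * truncatedKernel m y)) := fun h =>
    hχ (tsupport_mul_subset_left (tsupport_bilaplacian_subset _ h))
  rw [remainderKernel, image_eq_zero_of_notMem_tsupport hχ, image_eq_zero_of_notMem_tsupport hχQ,
    zero_mul, sub_zero]

lemma rieszKernel_mul_bilaplacian_cutoff_mul (m : ℕ) (u : E → ℝ) (y : E) :
    rieszKernel m y * Δ (Δ fun z => cutoff z * u z) y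
      = Δ (Δ fun z => cutoff z * u z) y * truncatedKernel m y
        - cutoff y * truncatedKernel m y * Δ (Δ u) y + cutoffKernel m y * Δ (Δ u) y := by
  rcases lt_or_ge (‖y‖ ^ 2) (1 / 2) with hy | hy
  · have hcongr : (fun z => cutoff z * u z) =ᶠ[𝓝 y] u := by
      filter_upwards [(by fun_prop : Continuous fun z : E => ‖z‖ ^ 2).tendsto y
        |>.eventually_lt_const hy] with z hz
      rw [cutoff_eq_one hz.le, one_mul]
    rw [bilaplacian_congr hcongr, cutoffKernel, cutoff_eq_one hy.le]
    ring
  · rw [truncatedKernel_eq_rieszKernel hy, cutoffKernel]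
    ring

variable [MeasurableSpace E] [BorelSpace E]

lemma integrable_cutoffKernel (hm : m < finrank ℝ E) : Integrable (cutoffKernel m : E → ℝ) := by
  refine (integrable_rieszKernel_mul hm continuous_cutoff hasCompactSupport_cutoff).congr ?_
  exact Eventually.of_forall fun y => mul_comm _ _

lemma integrable_remainderKernel : Integrable (remainderKernel m : E → ℝ) := by
  have hsupp : HasCompactSupport fun y : E => cutoff y * truncatedKernel m y :=
    hasCompactSupport_cutoff.mul_right
  refine Integrable.sub ?_ ?_
  · exact integrable_mul_of_tsupport continuous_cutoff hasCompactSupport_cutoff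
      fun x _ => (continuous_bilaplacian (contDiff_truncatedKernel (k := 4))).continuousAt
  · exact (continuous_bilaplacian contDiff_cutoff_mul_truncatedKernel
      ).integrable_of_hasCompactSupport
        (hsupp.mono' ((subset_tsupport _).trans (tsupport_bilaplacian_subset _)))

lemma integral_remainderKernel_mul (m : ℕ) {u : E → ℝ}
    (hu : ∀ y ∈ tsupport (cutoff : E → ℝ), ContDiffAt ℝ 4 u y) :
    ∫ y, remainderKernel m y * u y
      = (∫ y, Δ (Δ fun z => cutoff z * u z) y * truncatedKernel m y)
        - ∫ y, cutoff y * truncatedKernel m y * Δ (Δ u) y := by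
  have hv : ContDiff ℝ 4 fun y => cutoff y * u y :=
    contDiff_mul_of_tsupport (contDiff_cutoff (k := 4)) hu
  have hvc : HasCompactSupport fun y => cutoff y * u y := hasCompactSupport_cutoff.mul_right
  have hψ := contDiff_cutoff_mul_truncatedKernel (E := E) (m := m)
  have hψc : HasCompactSupport fun y : E => cutoff y * truncatedKernel m y :=
    hasCompactSupport_cutoff.mul_right
  have huψ : ∀ y ∈ tsupport fun y : E => cutoff y * truncatedKernel m y, ContDiffAt ℝ 4 u y :=
    fun y hy => hu y (tsupport_mul_subset_left hy)
  have hQ : ContDiff ℝ 4 (truncatedKernel m : E → ℝ) := contDiff_truncatedKernel (k := 4)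
  rw [← integral_mul_bilaplacian hv hvc fun y _ => hQ.contDiffAt,
    integral_mul_bilaplacian hψ hψc huψ, ← integral_sub]
  · exact integral_congr_ae (Eventually.of_forall fun y => by simp only [remainderKernel]; ring)
  · exact integrable_mul_of_tsupport hv.continuous hvc
      fun y _ => (continuous_bilaplacian hQ).continuousAt
  · exact integrable_mul_of_tsupport (continuous_bilaplacian hψ)
      (hψc.mono' ((subset_tsupport _).trans (tsupport_bilaplacian_subset _)))
      fun y hy => (huψ y (tsupport_bilaplacian_subset _ hy)).continuousAt

theorem representation_formula_zero (hE : finrank ℝ E = m + 4) {u : E → ℝ}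
    (hu : ∀ y ∈ closedBall (0 : E) 1, ContDiffAt ℝ 4 u y) :
    biharmonicConst E m * u 0
      = (∫ y, remainderKernel m y * u y) + ∫ y, cutoffKernel m y * Δ (Δ u) y := by
  have hu' : ∀ y ∈ tsupport (cutoff : E → ℝ), ContDiffAt ℝ 4 u y :=
    fun y hy => hu y (tsupport_cutoff_subset hy)
  have hΔu : ∀ y ∈ tsupport (cutoff : E → ℝ), ContinuousAt (Δ (Δ u)) y :=
    fun y hy => continuousAt_bilaplacian (hu' y hy)
  have hv : ContDiff ℝ 4 fun y => cutoff y * u y :=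
    contDiff_mul_of_tsupport (contDiff_cutoff (k := 4)) hu'
  have hvc : HasCompactSupport fun y => cutoff y * u y := hasCompactSupport_cutoff.mul_right
  have hv₀ := biharmonicConst_mul_apply_zero hE hv hvc
  rw [cutoff_eq_one (by norm_num), one_mul] at hv₀
  have hint₁ : Integrable fun y => Δ (Δ fun z => cutoff z * u z) y * truncatedKernel m y :=
    integrable_mul_of_tsupport (continuous_bilaplacian hv)
      (hvc.mono' ((subset_tsupport _).trans (tsupport_bilaplacian_subset _)))
      fun y _ => (contDiff_truncatedKernel (k := 4)).continuous.continuousAt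
  have hint₂ : Integrable fun y => cutoff y * truncatedKernel m y * Δ (Δ u) y :=
    integrable_mul_of_tsupport contDiff_cutoff_mul_truncatedKernel.continuous
      hasCompactSupport_cutoff.mul_right fun y hy => hΔu y (tsupport_mul_subset_left hy)
  have hint₃ : Integrable fun y => cutoffKernel m y * Δ (Δ u) y :=
    (integrable_rieszKernel_mul (m := m) (by omega)
      (continuous_mul_of_tsupport continuous_cutoff hΔu)
      hasCompactSupport_cutoff.mul_right).congr
        (Eventually.of_forall fun y => by simp only [cutoffKernel]; ring)
  rw [hv₀, integral_remainderKernel_mul m hu', ← integral_sub hint₁ hint₂]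
  rw [funext (rieszKernel_mul_bilaplacian_cutoff_mul m u)]
  exact integral_add (hint₁.sub hint₂) hint₃

theorem representation_formula (hE : finrank ℝ E = m + 4) {u : E → ℝ} {x : E} {R : ℝ}
    (hR : 0 ≤ R) (hu : ∀ y ∈ closedBall x R, ContDiffAt ℝ 4 u y) :
    biharmonicConst E m * u x = (∫ z, remainderKernel m z * u (x + R • z))
      + R ^ 4 * ∫ z, cutoffKernel m z * Δ (Δ u) (x + R • z) := by
  have hmaps {z : E} (hz : z ∈ closedBall (0 : E) 1) : x + R • z ∈ closedBall x R := by
    rw [mem_closedBall, dist_self_add_left, norm_smul, Real.norm_of_nonneg hR]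
    exact mul_le_of_le_one_right hR (by simpa using hz)
  have h := representation_formula_zero hE (u := fun z => 1 * u (x + R • z)) fun z hz =>
    contDiffAt_const.mul ((hu _ (hmaps hz)).comp z (by fun_prop))
  simp only [bilaplacian_const_mul_comp_add_smul] at h
  simpa [← integral_const_mul, mul_left_comm] using h

end RepresentationFormula

/-! ### From the local representation formula to the integral equation -/

section Representation

variable {E : Type*} [NormedAddCommGroup E] [InnerProductSpace ℝ E] [FiniteDimensional ℝ E]
  [MeasurableSpace E] [BorelSpace E]

/-- The `L¹` modulus of continuity of `J` under translations. -/
noncomputable def translationModulus (J : E → ℝ) (h : E) : ℝ := ∫ z, |J (h + z) - J z|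

lemma tendsto_translationModulus {J : E → ℝ} (hJ : Integrable J) :
    Tendsto (translationModulus J) (𝓝 0) (𝓝 0) := by
  have hmem : MemLp J 1 := memLp_one_iff_integrable.2 hJ
  have hnorm : ∀ h : E, ‖(DomAddAct.mk h +ᵥ hmem.toLp J) - hmem.toLp J‖ =
      translationModulus J h := fun h => by
    rw [DomAddAct.mk_vadd_toLp, ← MemLp.toLp_sub, L1.norm_eq_integral_norm]
    exact integral_congr_ae ((MemLp.coeFn_toLp _).fun_comp fun t => ‖t‖)
  have : Fact ((1 : ENNReal) ≠ ⊤) := ⟨ENNReal.one_ne_top⟩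
  have hcont : Continuous fun h : E =>
      ‖(DomAddAct.mk h +ᵥ hmem.toLp J) - hmem.toLp J‖ :=
    (((DomAddAct.mkHomeomorph.continuous).vadd continuous_const).sub continuous_const).norm
  have hzero : translationModulus J 0 = 0 := by simp [translationModulus]
  simpa only [hnorm, hzero] using hcont.tendsto 0

lemma integrable_mul_comp_add_smul {J v : E → ℝ} {B : ℝ} (hJ : Integrable J) (hv : Measurable v)
    (hB : ∀ x, |v x| ≤ B) (x : E) (R : ℝ) : Integrable fun z => J z * v (x + R • z) :=
  hJ.mul_bdd (hv.comp (by fun_prop : Measurable fun z : E => x + R • z)).aestronglyMeasurable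
    (Eventually.of_forall fun _ => hB _)

lemma abs_integral_mul_comp_add_smul_le {J v : E → ℝ} {B : ℝ} (hJ : Integrable J)
    (hB : ∀ x, |v x| ≤ B) (x : E) (R : ℝ) :
    |∫ z, J z * v (x + R • z)| ≤ (∫ z, |J z|) * B := by
  rw [← Real.norm_eq_abs, ← integral_mul_const]
  refine norm_integral_le_of_norm_le (hJ.abs.mul_const B) (Eventually.of_forall fun z => ?_)
  rw [norm_mul]
  exact mul_le_mul_of_nonneg_left (hB _) (norm_nonneg _)

lemma abs_integral_mul_comp_add_smul_sub_le {J v : E → ℝ} {B R : ℝ} (hJ : Integrable J)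
    (hv : Measurable v) (hB : ∀ x, |v x| ≤ B) (x y : E) (hR : 0 < R) :
    |(∫ z, J z * v (y + R • z)) - ∫ z, J z * v (x + R • z)| ≤
      translationModulus J (R⁻¹ • (x - y)) * B := by
  have hJ' : Integrable fun z => J (R⁻¹ • (x - y) + z) := hJ.comp_add_left _
  have hshift : ∫ z, J z * v (y + R • z) = ∫ z, J (R⁻¹ • (x - y) + z) * v (x + R • z) := by
    rw [← integral_add_left_eq_self (fun z => J z * v (y + R • z)) (R⁻¹ • (x - y))]
    refine integral_congr_ae (Eventually.of_forall fun z => ?_)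
    simp only [smul_add, smul_inv_smul₀ hR.ne', ← add_assoc, add_sub_cancel]
  rw [hshift, ← integral_sub (integrable_mul_comp_add_smul hJ' hv hB x R)
    (integrable_mul_comp_add_smul hJ hv hB x R), translationModulus,
    ← integral_mul_const, ← Real.norm_eq_abs]
  refine norm_integral_le_of_norm_le ((hJ'.sub hJ).abs.mul_const B)
    (Eventually.of_forall fun z => ?_)
  rw [← sub_mul, norm_mul]
  exact mul_le_mul_of_nonneg_left (hB _) (norm_nonneg _)

lemma tendsto_integral_mul_comp_add_smul {J v : E → ℝ} {w : ℕ → E → ℝ} {B : ℝ}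
    (hJ : Integrable J) (hw : ∀ k, Measurable (w k)) (hB : ∀ k x, |w k x| ≤ B)
    (hv : ∀ x, Tendsto (w · x) atTop (𝓝 (v x))) (x : E) (R : ℝ) :
    Tendsto (fun k => ∫ z, J z * w k (x + R • z)) atTop (𝓝 (∫ z, J z * v (x + R • z))) := by
  refine tendsto_integral_of_dominated_convergence _
    (fun k => (integrable_mul_comp_add_smul hJ (hw k) (hB k) x R).aestronglyMeasurable)
    (hJ.norm.mul_const B) (fun k => Eventually.of_forall fun z => ?_)
    (Eventually.of_forall fun z => (hv _).const_mul _)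
  rw [norm_mul]
  exact mul_le_mul_of_nonneg_left (hB k _) (norm_nonneg _)

variable {m : ℕ}

lemma pow_mul_integral_cutoffKernel (hm : m ≤ finrank ℝ E) {R : ℝ} (hR : 0 < R) (f : E → ℝ)
    (x : E) : R ^ (finrank ℝ E - m) * ∫ z, cutoffKernel m z * f (x + R • z) =
      ∫ y, cutoff (R⁻¹ • (y - x)) * (rieszKernel m (x - y) * f y) := by
  set g : E → ℝ := fun w => cutoff (R⁻¹ • w) * (rieszKernel m w * f (x + w)) with hg
  have hscale : ∀ z, g (R • z) = (R ^ m)⁻¹ * (cutoffKernel m z * f (x + R • z)) := fun z => by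
    simp only [hg, cutoffKernel, inv_smul_smul₀ hR.ne', rieszKernel_smul hR.le]
    ring
  have hint := Measure.integral_comp_smul_of_nonneg volume g R (hR := hR.le)
  simp only [hscale, integral_const_mul, smul_eq_mul] at hint
  calc R ^ (finrank ℝ E - m) * ∫ z, cutoffKernel m z * f (x + R • z) = ∫ w, g w := by
        rw [pow_sub₀ R hR.ne' hm, mul_assoc, hint, mul_inv_cancel_left₀ (by positivity)]
    _ = ∫ y, g (y - x) := (integral_sub_right_eq_self g x).symm
    _ = ∫ y, cutoff (R⁻¹ • (y - x)) * (rieszKernel m (x - y) * f y) := by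
        simp only [hg, add_sub_cancel, rieszKernel_sub_comm]

lemma not_integrable_rieszKernel (hm : m < finrank ℝ E) :
    ¬ Integrable (rieszKernel m : E → ℝ) := by
  intro h
  have hlim : Tendsto (fun R : ℝ => R ^ (finrank ℝ E - m) *
      ∫ z in ball (0 : E) 1, rieszKernel m z) atTop atTop :=
    (tendsto_pow_atTop (Nat.sub_pos_of_lt hm).ne').atTop_mul_const
      (setIntegral_ball_rieszKernel_pos hm one_pos)
  obtain ⟨R, hR, hlt⟩ :=
    ((eventually_gt_atTop 0).and (hlim.eventually_gt_atTop (∫ z : E, rieszKernel m z))).exists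
  rw [← setIntegral_ball_rieszKernel hm hR] at hlt
  exact hlt.not_ge (setIntegral_le_integral h (Eventually.of_forall rieszKernel_nonneg))

lemma exists_setIntegral_ball_rieszKernel_sub_le (hm : m < finrank ℝ E) :
    ∃ C : ℝ, ∀ w : E, ∫ z in ball (0 : E) 1, rieszKernel m (w - z) ≤ C ∧
      (w ≠ 0 → ∫ z in ball (0 : E) 1, rieszKernel m (w - z) ≤ C * rieszKernel m w) := by
  set I := ∫ z in ball (0 : E) 1, rieszKernel m z
  set V := volume.real (ball (0 : E) 1)
  have hI : 0 < I := setIntegral_ball_rieszKernel_pos hm one_pos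
  have : 0 ≤ V := measureReal_nonneg
  have hball : volume (ball (0 : E) 1) ≠ ⊤ := measure_ball_lt_top.ne
  have hle : ∀ w : E, ∫ z in ball (0 : E) 1, rieszKernel m (w - z) ≤ I + V := fun w => by
    simpa [I, V] using setIntegral_rieszKernel_sub_le hm w hball one_pos
  have htwo : (1 : ℝ) ≤ 2 ^ m := one_le_pow₀ one_le_two
  refine ⟨2 ^ m * (I + V), fun w =>
    ⟨(hle w).trans (le_mul_of_one_le_left (by positivity) htwo), fun hw => ?_⟩⟩
  have := norm_pos_iff.2 hw
  have hkernel (r : ℝ) : ((r / 2) ^ m)⁻¹ = 2 ^ m * (r ^ m)⁻¹ := by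
    rw [div_pow, inv_div, div_eq_mul_inv]
  rcases le_total ‖w‖ 2 with hw2 | hw2
  · have hone : 1 ≤ 2 ^ m * rieszKernel m w := by
      rw [rieszKernel, ← hkernel]
      exact (one_le_inv₀ (by positivity)).2 (pow_le_one₀ (by positivity) (by linarith))
    calc ∫ z in ball (0 : E) 1, rieszKernel m (w - z) ≤ I + V := hle w
      _ ≤ 2 ^ m * rieszKernel m w * (I + V) := le_mul_of_one_le_left (by positivity) hone
      _ = 2 ^ m * (I + V) * rieszKernel m w := by ring
  · have hfar : ∀ z ∈ ball (0 : E) 1, rieszKernel m (w - z) ≤ 2 ^ m * rieszKernel m w :=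
      fun z hz => by
        rw [rieszKernel.eq_1 (z := w), ← hkernel]
        refine rieszKernel_le_of_le_norm (by positivity) ?_
        linarith [norm_sub_norm_le w z, mem_ball_zero_iff.1 hz]
    calc ∫ z in ball (0 : E) 1, rieszKernel m (w - z)
        ≤ ∫ _ in ball (0 : E) 1, 2 ^ m * rieszKernel m w :=
          setIntegral_mono_on (integrableOn_rieszKernel_sub hm w hball) (integrableOn_const hball)
            measurableSet_ball hfar
      _ = 2 ^ m * V * rieszKernel m w := by rw [setIntegral_const, smul_eq_mul]; ring
      _ ≤ 2 ^ m * (I + V) * rieszKernel m w := by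
          have := rieszKernel_nonneg (m := m) w
          gcongr
          linarith

lemma setIntegral_rieszKernel_smul_sub_mul {R : ℝ} (hR : 0 < R) (f : E → ℝ) (y : E) :
    ∫ z in ball (0 : E) 1, rieszKernel m (R • z - y) * f y =
      (R ^ m)⁻¹ * (∫ z in ball (0 : E) 1, rieszKernel m (R⁻¹ • y - z)) * f y := by
  simp only [rieszKernel_smul_sub hR, integral_mul_const, integral_const_mul]

variable {f : E → ℝ}

lemma exists_setIntegral_rieszKernel_smul_sub_mul_le (hm : m < finrank ℝ E)
    (hf0 : ∀ y, 0 ≤ f y) : ∃ C : ℝ, ∀ R > (0 : ℝ), ∀ y ≠ 0,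
      ∫ z in ball (0 : E) 1, rieszKernel m (R • z - y) * f y ≤ (R ^ m)⁻¹ * C * f y ∧
      ∫ z in ball (0 : E) 1, rieszKernel m (R • z - y) * f y ≤
        C * (rieszKernel m (0 - y) * f y) := by
  obtain ⟨C, hC⟩ := exists_setIntegral_ball_rieszKernel_sub_le (E := E) hm
  refine ⟨C, fun R hR y hy => ?_⟩
  rw [setIntegral_rieszKernel_smul_sub_mul hR, ← mul_assoc]
  have hy' : R⁻¹ • y ≠ 0 := smul_ne_zero (inv_ne_zero hR.ne') hy
  have hkernel : rieszKernel m (0 - y) = (R ^ m)⁻¹ * rieszKernel m (R⁻¹ • y) := by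
    rw [rieszKernel_sub_comm, sub_zero, ← rieszKernel_smul hR.le, smul_inv_smul₀ hR.ne']
  refine ⟨mul_le_mul_of_nonneg_right ?_ (hf0 y), mul_le_mul_of_nonneg_right ?_ (hf0 y)⟩
  · exact mul_le_mul_of_nonneg_left (hC _).1 (by positivity)
  · rw [hkernel, mul_left_comm]
    exact mul_le_mul_of_nonneg_left ((hC _).2 hy') (by positivity)

lemma integrable_prod_rieszKernel_smul_sub_mul (hm0 : 0 < m) (hm : m < finrank ℝ E)
    (hf : Measurable f) (hf0 : ∀ y, 0 ≤ f y)
    (hint : Integrable fun y => rieszKernel m (0 - y) * f y) {R : ℝ} (hR : 0 < R) :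
    Integrable (fun q : E × E => rieszKernel m (R • q.1 - q.2) * f q.2)
      ((volume.restrict (ball 0 1)).prod volume) := by
  have : Nontrivial E := nontrivial_of_finrank_pos (hm0.trans hm)
  have hmeas : Measurable fun q : E × E => rieszKernel m (R • q.1 - q.2) * f q.2 :=
    (measurable_rieszKernel.comp (by fun_prop : Measurable fun q : E × E => R • q.1 - q.2)).mul
      (hf.comp measurable_snd)
  have hnonneg : ∀ z y, 0 ≤ rieszKernel m (R • z - y) * f y := fun z y =>
    mul_nonneg (rieszKernel_nonneg _) (hf0 y)
  obtain ⟨C, hC⟩ := exists_setIntegral_rieszKernel_smul_sub_mul_le hm hf0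
  refine (integrable_prod_iff' hmeas.aestronglyMeasurable).2
    ⟨Eventually.of_forall fun y => ?_, ?_⟩
  · simp only [rieszKernel_smul_sub hR]
    exact ((integrableOn_rieszKernel_sub hm _ measure_ball_lt_top.ne).const_mul _).mul_const _
  · refine (hint.const_mul C).mono' ?_ ?_
    · exact (hmeas.norm.stronglyMeasurable.integral_prod_left').aestronglyMeasurable
    · filter_upwards [compl_mem_ae_iff.2 (measure_singleton (0 : E))] with y hy
      simp only [Real.norm_of_nonneg (hnonneg _ _)]
      rw [Real.norm_of_nonneg (integral_nonneg fun z => hnonneg z y)]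
      exact (hC R hR y hy).2

lemma exists_rieszPotential_lt (hm0 : 0 < m) (hm : m < finrank ℝ E) (hf : Measurable f)
    (hf0 : ∀ y, 0 ≤ f y) (hint : Integrable fun y => rieszKernel m (0 - y) * f y) {δ : ℝ}
    (hδ : 0 < δ) : ∃ x, rieszPotential m f x < δ := by
  have : Nontrivial E := nontrivial_of_finrank_pos (hm0.trans hm)
  by_contra! hle
  have hprod := fun R : ℝ => integrable_prod_rieszKernel_smul_sub_mul hm0 hm hf hf0 hint (R := R)
  have hlower : ∀ R > (0 : ℝ), δ * volume.real (ball (0 : E) 1) ≤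
      ∫ y, ∫ z in ball (0 : E) 1, rieszKernel m (R • z - y) * f y := fun R hR => by
    rw [← integral_integral_swap (hprod R hR), mul_comm, ← smul_eq_mul, ← setIntegral_const]
    exact setIntegral_mono (integrableOn_const measure_ball_lt_top.ne)
      (hprod R hR).integral_prod_left fun z => hle (R • z)
  obtain ⟨C, hC⟩ := exists_setIntegral_rieszKernel_smul_sub_mul_le hm hf0
  have hzero : ∀ᵐ y : E, y ≠ 0 := compl_mem_ae_iff.2 (measure_singleton (0 : E))
  have hnonneg : ∀ (R : ℝ) (y : E), 0 ≤ ∫ z in ball (0 : E) 1, rieszKernel m (R • z - y) * f y :=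
    fun R y => integral_nonneg fun z => mul_nonneg (rieszKernel_nonneg _) (hf0 y)
  have hlim : Tendsto (fun R : ℝ => ∫ y, ∫ z in ball (0 : E) 1, rieszKernel m (R • z - y) * f y)
      atTop (𝓝 (∫ _ : E, (0 : ℝ))) := by
    refine tendsto_integral_filter_of_dominated_convergence _ ?_ ?_ (hint.const_mul C) ?_
    · filter_upwards [eventually_gt_atTop 0] with R hR
      exact (hprod R hR).integral_prod_right.aestronglyMeasurable
    · filter_upwards [eventually_gt_atTop 0] with R hR
      filter_upwards [hzero] with y hy
      rw [Real.norm_of_nonneg (hnonneg R y)]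
      exact (hC R hR y hy).2
    · filter_upwards [hzero] with y hy
      refine squeeze_zero' (Eventually.of_forall fun R => hnonneg R y)
        ((eventually_gt_atTop 0).mono fun R hR => (hC R hR y hy).1) ?_
      have hinv : Tendsto (fun R : ℝ => (R ^ m)⁻¹) atTop (𝓝 0) :=
        tendsto_inv_atTop_zero.comp (tendsto_pow_atTop hm0.ne')
      simpa using (hinv.mul_const C).mul_const (f y)
  rw [integral_zero] at hlim
  have hvol : 0 < volume.real (ball (0 : E) 1) :=
    ENNReal.toReal_pos (measure_ball_pos _ _ one_pos).ne' measure_ball_lt_top.ne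
  exact (mul_pos hδ hvol).not_ge (ge_of_tendsto hlim ((eventually_gt_atTop 0).mono hlower))

lemma tendsto_integral_cutoff_mul {g : E → ℝ} (hg : Integrable g) (x : E) :
    Tendsto (fun R : ℝ => ∫ y, cutoff (R⁻¹ • (y - x)) * g y) atTop (𝓝 (∫ y, g y)) := by
  refine tendsto_integral_filter_of_dominated_convergence _
    (Eventually.of_forall fun R => ?_) (Eventually.of_forall fun R => ?_) hg.norm ?_
  · exact (continuous_cutoff.comp (by fun_prop)).aestronglyMeasurable.mul hg.aestronglyMeasurable
  · refine Eventually.of_forall fun y => ?_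
    rw [norm_mul, Real.norm_of_nonneg (cutoff_nonneg _)]
    exact mul_le_of_le_one_left (norm_nonneg _) (cutoff_le_one _)
  · refine Eventually.of_forall fun y => ?_
    have hlim : Tendsto (fun R : ℝ => ‖R⁻¹ • (y - x)‖ ^ 2) atTop (𝓝 0) := by
      simpa using ((tendsto_inv_atTop_zero (𝕜 := ℝ)).smul_const (y - x)).norm.pow 2
    refine tendsto_const_nhds.congr' ?_
    filter_upwards [hlim.eventually (ge_mem_nhds one_half_pos)] with R hR
    rw [cutoff_eq_one hR, one_mul]

/-- The representation formula of a bounded function `u` on the whole space with a bounded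
nonnegative density `f`: a truncated Riesz potential of `f` at every scale `R`, up to a remainder
which averages `u` at the scale `R` against an integrable kernel `K`. -/
structure TruncatedRepresentation (m : ℕ) (κ M N : ℝ) (K u f : E → ℝ) : Prop where
  integrable_kernel : Integrable K
  measurable : Measurable u
  abs_le : ∀ x, |u x| ≤ M
  measurable_density : Measurable f
  density_nonneg : ∀ x, 0 ≤ f x
  density_le : ∀ x, f x ≤ N
  mul_eq : ∀ x (R : ℝ), 0 < R → κ * u x = (∫ z, K z * u (x + R • z)) +
    R ^ (finrank ℝ E - m) * ∫ z, cutoffKernel m z * f (x + R • z)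

namespace TruncatedRepresentation

variable {κ M N : ℝ} {K u : E → ℝ}

lemma integrableOn_ball (h : TruncatedRepresentation m κ M N K u f) (hm : m < finrank ℝ E)
    (x : E) (r : ℝ) : IntegrableOn (fun y => rieszKernel m (x - y) * f y) (ball x r) := by
  refine (integrableOn_rieszKernel_sub hm x measure_ball_lt_top.ne).mul_bdd (c := N)
    h.measurable_density.aestronglyMeasurable (Eventually.of_forall fun y => ?_)
  rw [Real.norm_of_nonneg (h.density_nonneg y)]
  exact h.density_le y

lemma integrable_cutoff_mul (h : TruncatedRepresentation m κ M N K u f) (hm : m < finrank ℝ E)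
    (x : E) {R : ℝ} (hR : 0 < R) :
    Integrable fun y => cutoff (R⁻¹ • (y - x)) * (rieszKernel m (x - y) * f y) := by
  refine (integrableOn_iff_integrable_of_support_subset (s := ball x R) fun y hy => ?_).1
    ((h.integrableOn_ball hm x R).bdd_mul (c := 1)
      (continuous_cutoff.comp (by fun_prop)).aestronglyMeasurable
      (Eventually.of_forall fun y => ?_))
  · by_contra hyR
    refine hy ?_
    have hle : 1 ≤ ‖R⁻¹ • (y - x)‖ := by
      rw [norm_smul, norm_inv, Real.norm_of_nonneg hR.le, ← dist_eq_norm, ← div_eq_inv_mul,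
        one_le_div hR]
      exact not_lt.1 hyR
    simp only [cutoff_eq_zero hle, zero_mul]
  · rw [Real.norm_of_nonneg (cutoff_nonneg _)]
    exact cutoff_le_one _

lemma mul_eq_integral_cutoff_mul (h : TruncatedRepresentation m κ M N K u f)
    (hm : m < finrank ℝ E) (x : E) {R : ℝ} (hR : 0 < R) :
    κ * u x = (∫ z, K z * u (x + R • z)) +
      ∫ y, cutoff (R⁻¹ • (y - x)) * (rieszKernel m (x - y) * f y) := by
  rw [h.mul_eq x R hR, pow_mul_integral_cutoffKernel hm.le hR]

lemma setIntegral_ball_le (h : TruncatedRepresentation m κ M N K u f) (hm : m < finrank ℝ E)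
    (x : E) {r : ℝ} (hr : 0 < r) :
    ∫ y in ball x r, rieszKernel m (x - y) * f y ≤ |κ| * M + (∫ z, |K z|) * M := by
  have h2r : 0 < 2 * r := by positivity
  have hcutoff := h.integrable_cutoff_mul hm x h2r
  have hnonneg : ∀ y, 0 ≤ rieszKernel m (x - y) * f y := fun y =>
    mul_nonneg (rieszKernel_nonneg _) (h.density_nonneg y)
  have hone : ∀ y ∈ ball x r, cutoff ((2 * r)⁻¹ • (y - x)) = 1 := fun y hy => by
    refine cutoff_eq_one ?_
    have hle : ‖(2 * r)⁻¹ • (y - x)‖ ≤ 1 / 2 := by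
      rw [norm_smul, norm_inv, Real.norm_of_nonneg h2r.le, ← dist_eq_norm, ← div_eq_inv_mul,
        div_le_iff₀ h2r]
      linarith [mem_ball.1 hy]
    nlinarith [norm_nonneg ((2 * r)⁻¹ • (y - x))]
  calc ∫ y in ball x r, rieszKernel m (x - y) * f y
      = ∫ y in ball x r, cutoff ((2 * r)⁻¹ • (y - x)) * (rieszKernel m (x - y) * f y) :=
        setIntegral_congr_fun measurableSet_ball fun y hy => by simp only [hone y hy, one_mul]
    _ ≤ ∫ y, cutoff ((2 * r)⁻¹ • (y - x)) * (rieszKernel m (x - y) * f y) :=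
        setIntegral_le_integral hcutoff
          (Eventually.of_forall fun y => mul_nonneg (cutoff_nonneg _) (hnonneg y))
    _ = κ * u x - ∫ z, K z * u (x + (2 * r) • z) := by
        rw [h.mul_eq_integral_cutoff_mul hm x h2r, add_sub_cancel_left]
    _ ≤ |κ| * M + (∫ z, |K z|) * M := by
        rw [sub_eq_add_neg]
        refine add_le_add ((le_abs_self _).trans ?_) ((neg_le_abs _).trans
          (abs_integral_mul_comp_add_smul_le h.integrable_kernel h.abs_le x _))
        rw [abs_mul]
        exact mul_le_mul_of_nonneg_left (h.abs_le x) (abs_nonneg κ)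

lemma integrable_rieszKernel_mul (h : TruncatedRepresentation m κ M N K u f)
    (hm : m < finrank ℝ E) (x : E) : Integrable fun y => rieszKernel m (x - y) * f y :=
  (aecover_ball (x := x) tendsto_id).integrable_of_integral_bounded_of_nonneg_ae _
    (h.integrableOn_ball hm x)
    (Eventually.of_forall fun y => mul_nonneg (rieszKernel_nonneg _) (h.density_nonneg y))
    ((eventually_gt_atTop (0 : ℝ)).mono fun _ hr => h.setIntegral_ball_le hm x hr)

lemma tendsto_integral_kernel_mul (h : TruncatedRepresentation m κ M N K u f)
    (hm : m < finrank ℝ E) (x : E) :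
    Tendsto (fun R : ℝ => ∫ z, K z * u (x + R • z)) atTop
      (𝓝 (κ * u x - rieszPotential m f x)) := by
  refine ((tendsto_integral_cutoff_mul (h.integrable_rieszKernel_mul hm x) x).const_sub
    (κ * u x)).congr' ?_
  filter_upwards [eventually_gt_atTop 0] with R hR
  rw [h.mul_eq_integral_cutoff_mul hm x hR, add_sub_cancel_right]

lemma sub_rieszPotential_eq (h : TruncatedRepresentation m κ M N K u f) (hm : m < finrank ℝ E)
    (x y : E) : κ * u x - rieszPotential m f x = κ * u y - rieszPotential m f y := by
  have hmod : Tendsto (fun R : ℝ => translationModulus K (R⁻¹ • (y - x)) * M) atTop (𝓝 0) := by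
    have hzero : Tendsto (fun R : ℝ => R⁻¹ • (y - x)) atTop (𝓝 0) := by
      simpa using (tendsto_inv_atTop_zero (𝕜 := ℝ)).smul_const (y - x)
    simpa using ((tendsto_translationModulus h.integrable_kernel).comp hzero).mul_const M
  have hdiff : Tendsto (fun R : ℝ => (∫ z, K z * u (x + R • z)) - ∫ z, K z * u (y + R • z))
      atTop (𝓝 0) := by
    refine squeeze_zero_norm' ?_ hmod
    filter_upwards [eventually_gt_atTop 0] with R hR
    exact abs_integral_mul_comp_add_smul_sub_le h.integrable_kernel h.measurable h.abs_le y x hR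
  exact sub_eq_zero.1 (tendsto_nhds_unique
    ((h.tendsto_integral_kernel_mul hm x).sub (h.tendsto_integral_kernel_mul hm y)) hdiff)

theorem mul_eq_rieszPotential (h : TruncatedRepresentation m κ M N K u f) (hm0 : 0 < m)
    (hm : m < finrank ℝ E) (hκ : 0 < κ) (hu0 : ∀ x, 0 ≤ u x)
    (hlower : ∀ b > 0, (∀ x, b ≤ u x) → ∃ b' > 0, ∀ x, b' ≤ f x) (x : E) :
    κ * u x = rieszPotential m f x := by
  rw [← sub_eq_zero]
  set c := κ * u x - rieszPotential m f x
  have hconst : ∀ y, κ * u y - rieszPotential m f y = c := fun y =>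
    h.sub_rieszPotential_eq hm y x
  have hint := h.integrable_rieszKernel_mul hm
  rcases lt_trichotomy c 0 with hneg | hzero | hpos
  · obtain ⟨y, hy⟩ := exists_rieszPotential_lt hm0 hm h.measurable_density h.density_nonneg
      (hint 0) (neg_pos.2 hneg)
    linarith [hconst y, mul_nonneg hκ.le (hu0 y)]
  · exact hzero
  · obtain ⟨b, hb, hbf⟩ := hlower (c / κ) (div_pos hpos hκ) fun y => by
      have : 0 ≤ rieszPotential m f y := integral_nonneg fun z =>
        mul_nonneg (rieszKernel_nonneg _) (h.density_nonneg z)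
      rw [div_le_iff₀' hκ]
      linarith [hconst y]
    have hkernel : Integrable fun y : E => rieszKernel m (0 - y) * b :=
      (hint 0).mono' ((measurable_rieszKernel.comp (by fun_prop)).mul_const b).aestronglyMeasurable
        (Eventually.of_forall fun y => by
          rw [Real.norm_of_nonneg (mul_nonneg (rieszKernel_nonneg _) hb.le)]
          exact mul_le_mul_of_nonneg_left (hbf y) (rieszKernel_nonneg _))
    refine absurd ?_ (not_integrable_rieszKernel (E := E) hm)
    simpa [mul_inv_cancel_right₀ hb.ne'] using (hkernel.mul_const b⁻¹).comp_neg

end TruncatedRepresentation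

end Representation

/-! ### Compactness -/

section Compactness

lemma exists_subseq_forall_tendsto {X F : Type*} [TopologicalSpace X]
    [TopologicalSpace.SeparableSpace X] [PseudoMetricSpace F] {S : Set F} (hS : IsCompact S)
    {f : ℕ → X → F} (hf : ∀ k x, f k x ∈ S)
    (hequi : ∀ x, ∀ ε > 0, ∀ᶠ y in 𝓝 x, ∀ᶠ k in atTop, dist (f k x) (f k y) ≤ ε) :
    ∃ φ : ℕ → ℕ, StrictMono φ ∧
      ∃ g : X → F, ∀ x, Tendsto (fun k => f (φ k) x) atTop (𝓝 (g x)) := by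
  obtain ⟨Q, hQcount, hQdense⟩ := TopologicalSpace.exists_countable_dense X
  have := hQcount.to_subtype
  obtain ⟨g, -, φ, hφ, hg⟩ := (isCompact_univ_pi fun _ : Q => hS).tendsto_subseq
    (x := fun k (q : Q) => f k q)
    fun k q _ => hf k q
  refine ⟨φ, hφ, ?_⟩
  suffices hcauchy : ∀ x, CauchySeq fun k => f (φ k) x by
    have hlim := fun x => cauchySeq_tendsto_of_isComplete hS.isComplete
      (fun k => hf (φ k) x) (hcauchy x)
    choose g' _ hg' using hlim
    exact ⟨g', hg'⟩
  refine fun x => Metric.cauchySeq_iff.2 fun ε hε => ?_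
  obtain ⟨q, hqQ, hq⟩ := hQdense.inter_nhds_nonempty (hequi x (ε / 4) (by positivity))
  obtain ⟨N, hN⟩ := Metric.cauchySeq_iff.1 (tendsto_pi_nhds.1 hg ⟨q, hqQ⟩).cauchySeq (ε / 4)
    (by positivity)
  obtain ⟨N', hN'⟩ := eventually_atTop.1 (hφ.tendsto_atTop.eventually hq)
  refine ⟨max N N', fun k hk l hl => ?_⟩
  calc dist (f (φ k) x) (f (φ l) x)
      ≤ dist (f (φ k) x) (f (φ k) q) + dist (f (φ k) q) (f (φ l) q) +
          dist (f (φ l) q) (f (φ l) x) := dist_triangle4 _ _ _ _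
    _ ≤ ε / 4 + ε / 4 + ε / 4 := by
        rw [dist_comm (f (φ l) q)]
        exact add_le_add (add_le_add (hN' k (le_of_max_le_right hk))
          (hN k (le_of_max_le_left hk) l (le_of_max_le_left hl)).le)
          (hN' l (le_of_max_le_right hl))
    _ < ε := by linarith

end Compactness

section LocalSolution

variable {E : Type*} [NormedAddCommGroup E] [InnerProductSpace ℝ E] [FiniteDimensional ℝ E]
  [MeasurableSpace E] [BorelSpace E] {ι : Type*} [Fintype ι]

/-- Bounded nonnegative functions which satisfy the representation formula of the integral equation
on all balls contained in `D`, at the scale of the ball. The kernel `K` of the remainder does not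
depend on the solution, which makes this class compact as `D` exhausts the space. -/
structure LocalRieszSolution (m : ℕ) (s κ M : ℝ) (K : E → ℝ) (D : Set E)
    (U : E → EuclideanSpace ℝ ι) : Prop where
  const_pos : 0 < κ
  integrable_kernel : Integrable K
  measurable : Measurable U
  nonneg : ∀ x i, 0 ≤ U x i
  norm_le : ∀ x, ‖U x‖ ≤ M
  mul_eq : ∀ x (R : ℝ), 0 < R → closedBall x R ⊆ D → ∀ i, κ * U x i =
    (∫ z, K z * U (x + R • z) i) +
      R ^ (finrank ℝ E - m) * ∫ z, cutoffKernel m z * powerMap s (U (x + R • z)) i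

namespace LocalRieszSolution

variable {m : ℕ} {s κ M : ℝ} {K : E → ℝ} {D : Set E} {U : E → EuclideanSpace ℝ ι}

lemma measurable_apply (hU : LocalRieszSolution m s κ M K D U) (i : ι) :
    Measurable fun x => U x i :=
  (EuclideanSpace.proj (𝕜 := ℝ) i).continuous.measurable.comp hU.measurable

lemma measurable_powerMap_apply (hU : LocalRieszSolution m s κ M K D U) (hs : 1 < s) (i : ι) :
    Measurable fun x => powerMap s (U x) i :=
  ((EuclideanSpace.proj (𝕜 := ℝ) i).continuous.comp (continuous_powerMap hs)).measurable.comp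
    hU.measurable

lemma abs_apply_le (hU : LocalRieszSolution m s κ M K D U) (x : E) (i : ι) : |U x i| ≤ M :=
  (PiLp.norm_apply_le (U x) i).trans (hU.norm_le x)

lemma powerMap_apply_nonneg (hU : LocalRieszSolution m s κ M K D U) (x : E) (i : ι) :
    0 ≤ powerMap s (U x) i :=
  BiharmonicSystem.powerMap_apply_nonneg (hU.nonneg x i)

lemma powerMap_apply_le (hU : LocalRieszSolution m s κ M K D U) (hs : 1 < s) (x : E) (i : ι) :
    powerMap s (U x) i ≤ M ^ s :=
  BiharmonicSystem.powerMap_apply_le hs (hU.nonneg x i) (hU.norm_le x)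

lemma abs_powerMap_apply_le (hU : LocalRieszSolution m s κ M K D U) (hs : 1 < s) (x : E) (i : ι) :
    |powerMap s (U x) i| ≤ M ^ s :=
  (abs_of_nonneg (hU.powerMap_apply_nonneg x i)).trans_le (hU.powerMap_apply_le hs x i)

lemma mul_abs_apply_sub_le (hU : LocalRieszSolution m s κ M K D U) (hm : m < finrank ℝ E)
    (hs : 1 < s) {x y : E} (hx : closedBall x 1 ⊆ D) (hy : closedBall y 1 ⊆ D) (i : ι) :
    κ * |U x i - U y i| ≤
      translationModulus K (y - x) * M + translationModulus (cutoffKernel m) (y - x) * M ^ s := by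
  have habs : κ * |U x i - U y i| = |κ * U x i - κ * U y i| := by
    rw [← mul_sub, abs_mul, abs_of_pos hU.const_pos]
  rw [habs, hU.mul_eq x 1 one_pos hx, hU.mul_eq y 1 one_pos hy, one_pow, one_mul, one_mul,
    add_sub_add_comm]
  have hK := abs_integral_mul_comp_add_smul_sub_le hU.integrable_kernel (hU.measurable_apply i)
    (hU.abs_apply_le · i) y x one_pos
  have hcutoff := abs_integral_mul_comp_add_smul_sub_le (integrable_cutoffKernel hm)
    (hU.measurable_powerMap_apply hs i) (hU.abs_powerMap_apply_le hs · i) y x one_pos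
  rw [inv_one, one_smul] at hK hcutoff
  exact (abs_add_le _ _).trans (add_le_add hK hcutoff)

lemma eventually_dist_ofLp_le (hκ : 0 < κ) (hK : Integrable K) (hm : m < finrank ℝ E)
    (hs : 1 < s) (M : ℝ) (x : E) {ε : ℝ} (hε : 0 < ε) :
    ∀ᶠ y in 𝓝 x, ∀ (D : Set E) (U : E → EuclideanSpace ℝ ι), LocalRieszSolution m s κ M K D U →
      closedBall x 1 ⊆ D → closedBall y 1 ⊆ D → dist (U x).ofLp (U y).ofLp ≤ ε := by
  have hsub : Tendsto (fun y => y - x) (𝓝 x) (𝓝 0) := by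
    simpa using (continuous_sub_right x).tendsto x
  have hlim : Tendsto (fun y => translationModulus K (y - x) * M +
      translationModulus (cutoffKernel m) (y - x) * M ^ s) (𝓝 x) (𝓝 0) := by
    simpa using (((tendsto_translationModulus hK).comp hsub).mul_const M).add
      (((tendsto_translationModulus (integrable_cutoffKernel hm)).comp hsub).mul_const (M ^ s))
  filter_upwards [hlim.eventually (ge_mem_nhds (mul_pos hκ hε))] with y hy D U hU hxD hyD
  refine (dist_pi_le_iff hε.le).2 fun i => le_of_mul_le_mul_left ?_ hκ
  exact (hU.mul_abs_apply_sub_le hm hs hxD hyD i).trans hy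

lemma continuous (hU : LocalRieszSolution m s κ M K Set.univ U) (hm : m < finrank ℝ E)
    (hs : 1 < s) : Continuous U := by
  have hcont : Continuous fun x => (U x).ofLp := by
    refine continuous_iff_continuousAt.2 fun x => Metric.tendsto_nhds.2 fun ε hε => ?_
    filter_upwards [eventually_dist_ofLp_le (ι := ι) hU.const_pos hU.integrable_kernel hm hs M x
      (half_pos hε)] with y hy
    rw [dist_comm]
    exact (hy _ U hU (Set.subset_univ _) (Set.subset_univ _)).trans_lt (half_lt_self hε)
  exact (PiLp.continuous_toLp 2 _).comp hcont

lemma truncatedRepresentation (hU : LocalRieszSolution m s κ M K Set.univ U) (hs : 1 < s) (i : ι) :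
    TruncatedRepresentation m κ M (M ^ s) K (fun x => U x i) fun x => powerMap s (U x) i where
  integrable_kernel := hU.integrable_kernel
  measurable := hU.measurable_apply i
  abs_le := (hU.abs_apply_le · i)
  measurable_density := hU.measurable_powerMap_apply hs i
  density_nonneg := (hU.powerMap_apply_nonneg · i)
  density_le := (hU.powerMap_apply_le hs · i)
  mul_eq x R hR := hU.mul_eq x R hR (Set.subset_univ _) i

theorem rieszSolution (hU : LocalRieszSolution m s κ M K Set.univ U) (hm0 : 0 < m)
    (hm : m < finrank ℝ E) (hs : 1 < s) : RieszSolution m s κ M U where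
  const_pos := hU.const_pos
  continuous := hU.continuous hm hs
  nonneg := hU.nonneg
  norm_le := hU.norm_le
  integrable x i := (hU.truncatedRepresentation hs i).integrable_rieszKernel_mul hm x
  mul_eq_rieszPotential x i := by
    refine (hU.truncatedRepresentation hs i).mul_eq_rieszPotential hm0 hm hU.const_pos
      (hU.nonneg · i) (fun b hb hle => ⟨b ^ (s - 1) * b, by positivity, fun y => ?_⟩) x
    exact mul_le_mul (Real.rpow_le_rpow hb.le ((hle y).trans (apply_le_norm _ i)) (by linarith))
      (hle y) hb.le (Real.rpow_nonneg (norm_nonneg _) _)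

variable {D : ℕ → Set E} {U : ℕ → E → EuclideanSpace ℝ ι} {V : E → EuclideanSpace ℝ ι}

lemma of_tendsto (hm : m < finrank ℝ E) (hs : 1 < s)
    (hD : ∀ x R, ∀ᶠ k in atTop, closedBall x R ⊆ D k)
    (hU : ∀ k, LocalRieszSolution m s κ M K (D k) (U k))
    (hV : ∀ x, Tendsto (U · x) atTop (𝓝 (V x))) : LocalRieszSolution m s κ M K Set.univ V where
  const_pos := (hU 0).const_pos
  integrable_kernel := (hU 0).integrable_kernel
  measurable := measurable_of_tendsto_metrizable (fun k => (hU k).measurable)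
    (tendsto_pi_nhds.2 hV)
  nonneg x i := ge_of_tendsto (((EuclideanSpace.proj (𝕜 := ℝ) i).continuous.tendsto _).comp (hV x))
    (Eventually.of_forall fun k => (hU k).nonneg x i)
  norm_le x := le_of_tendsto (hV x).norm (Eventually.of_forall fun k => (hU k).norm_le x)
  mul_eq x R hR _ i := by
    have happly := fun y => ((EuclideanSpace.proj (𝕜 := ℝ) i).continuous.tendsto _).comp (hV y)
    have hpower := fun y => (((EuclideanSpace.proj (𝕜 := ℝ) i).continuous.comp
      (continuous_powerMap hs)).tendsto _).comp (hV y)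
    have hKint : Tendsto (fun k => ∫ z, K z * U k (x + R • z) i) atTop
        (𝓝 (∫ z, K z * V (x + R • z) i)) :=
      tendsto_integral_mul_comp_add_smul (hU 0).integrable_kernel
        (fun k => (hU k).measurable_apply i) (fun k => ((hU k).abs_apply_le · i)) happly x R
    have hcutoff : Tendsto (fun k => ∫ z, cutoffKernel m z * powerMap s (U k (x + R • z)) i) atTop
        (𝓝 (∫ z, cutoffKernel m z * powerMap s (V (x + R • z)) i)) :=
      tendsto_integral_mul_comp_add_smul (integrable_cutoffKernel hm)
        (fun k => (hU k).measurable_powerMap_apply hs i)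
        (fun k => ((hU k).abs_powerMap_apply_le hs · i)) hpower x R
    refine tendsto_nhds_unique ((happly x).const_mul κ)
      ((hKint.add (hcutoff.const_mul _)).congr' ?_)
    filter_upwards [hD x R] with k hk
    exact ((hU k).mul_eq x R hR hk i).symm

lemma exists_subseq_tendsto (hm : m < finrank ℝ E) (hs : 1 < s)
    (hD : ∀ x R, ∀ᶠ k in atTop, closedBall x R ⊆ D k)
    (hU : ∀ k, LocalRieszSolution m s κ M K (D k) (U k)) :
    ∃ φ : ℕ → ℕ, StrictMono φ ∧ ∃ V : E → EuclideanSpace ℝ ι,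
      (∀ x, Tendsto (fun k => U (φ k) x) atTop (𝓝 (V x))) ∧
        LocalRieszSolution m s κ M K Set.univ V := by
  obtain ⟨φ, hφ, V, hV⟩ := exists_subseq_forall_tendsto
    (f := fun k x => (U k x).ofLp) (isCompact_univ_pi fun _ : ι => isCompact_Icc (a := 0) (b := M))
    (fun k x i _ => ⟨(hU k).nonneg x i, (apply_le_norm _ i).trans ((hU k).norm_le x)⟩)
    fun x ε hε => by
      filter_upwards [eventually_dist_ofLp_le (ι := ι) (hU 0).const_pos (hU 0).integrable_kernel hm
        hs M x hε] with y hy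
      filter_upwards [hD x 1, hD y 1] with k hx hy'
      exact hy _ _ (hU k) hx hy'
  have hlim : ∀ x, Tendsto (fun k => U (φ k) x) atTop (𝓝 (WithLp.toLp 2 (V x))) := fun x =>
    ((PiLp.continuous_toLp 2 _).tendsto (V x)).comp (hV x)
  exact ⟨φ, hφ, _, hlim, of_tendsto hm hs
    (fun x R => hφ.tendsto_atTop.eventually (hD x R)) (fun k => hU (φ k)) hlim⟩

theorem exists_norm_lt (hs : SubcriticalExponent E m s)
    (hD : ∀ x R, ∀ᶠ k in atTop, closedBall x R ⊆ D k)
    (hU : ∀ k, LocalRieszSolution m s κ M K (D k) (U k)) (x : E) {δ : ℝ} (hδ : 0 < δ) :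
    ∃ k, ‖U k x‖ < δ := by
  obtain ⟨φ, -, V, hlim, hV⟩ := exists_subseq_tendsto hs.lt_finrank hs.one_lt hD hU
  have hzero : V x = 0 :=
    (hV.rieszSolution hs.pos hs.lt_finrank hs.one_lt).eq_zero_of_subcritical hs x
  have hnorm : Tendsto (fun k => ‖U (φ k) x‖) atTop (𝓝 0) := by
    simpa [hzero] using (hlim x).norm
  obtain ⟨k, hk⟩ := (hnorm.eventually (gt_mem_nhds hδ)).exists
  exact ⟨φ k, hk⟩

end LocalRieszSolution

end LocalSolution

/-! ### Solutions and blow-up -/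

section Doubling

/-- The point `y` maximises `f y * (ρ - dist y x)`: it is the centre of a blow-up. -/
lemma exists_forall_mem_ball_le_two_mul {X : Type*} [PseudoMetricSpace X] [ProperSpace X]
    {f : X → ℝ} {x : X} {ρ : ℝ} (hρ : 0 ≤ ρ) (hf : ContinuousOn f (closedBall x ρ))
    (hf₀ : ∀ z ∈ closedBall x ρ, 0 ≤ f z) :
    ∃ y, f x * ρ ≤ f y * (ρ - dist y x) ∧
      ∀ z ∈ ball y ((ρ - dist y x) / 2), z ∈ closedBall x ρ ∧ f z ≤ 2 * f y := by
  obtain ⟨y, -, hmax⟩ := (isCompact_closedBall x ρ).exists_isMaxOn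
    ⟨x, mem_closedBall_self hρ⟩
    (hf.mul (by fun_prop : Continuous fun z => ρ - dist z x).continuousOn)
  refine ⟨y, by simpa using hmax (mem_closedBall_self hρ), fun z hz => ?_⟩
  have hdist : dist z x ≤ dist z y + dist y x := dist_triangle z y x
  have hzy : dist z y < (ρ - dist y x) / 2 := hz
  have hgap : 0 < ρ - dist y x := by linarith [dist_nonneg (x := z) (y := y)]
  have hzρ : z ∈ closedBall x ρ := mem_closedBall.2 (by linarith)
  have hle : f z * ((ρ - dist y x) / 2) ≤ f y * (ρ - dist y x) :=
    (mul_le_mul_of_nonneg_left (by linarith) (hf₀ z hzρ)).trans (hmax hzρ)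
  exact ⟨hzρ, le_of_mul_le_mul_right (by linarith) hgap⟩

lemma lt_rpow_inv_mul {a b r γ : ℝ} (ha : 0 ≤ a) (hr : 0 < r) (hγ : 0 < γ)
    (h : a ^ γ * r ^ (-γ) < b) : a < b ^ γ⁻¹ * r := by
  have hb : 0 < b := lt_of_le_of_lt (by positivity) h
  rw [← div_lt_iff₀ hr, Real.lt_rpow_inv_iff_of_pos (by positivity) hb.le hγ,
    Real.div_rpow ha hr.le, div_eq_mul_inv, ← Real.rpow_neg hr.le]
  exact h

end Doubling

section Solution

open Laplacian

variable {E : Type*} [NormedAddCommGroup E] [InnerProductSpace ℝ E] [FiniteDimensional ℝ E]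
  {ι : Type*} [Fintype ι] {m : ℕ} {s M : ℝ} {U : E → EuclideanSpace ℝ ι} {S T : Set E}

/-- Nonnegative classical solutions of `Δ² U = |U|^{s-1} U` on `S`. The components of `U` are
gathered in a map with values in Euclidean space, so that `|U|` is its norm. -/
structure IsSolutionOn (s : ℝ) (U : E → EuclideanSpace ℝ ι) (S : Set E) : Prop where
  contDiffOn : ∀ i, ContDiffOn ℝ 4 (fun x => U x i) S
  nonneg : ∀ x ∈ S, ∀ i, 0 ≤ U x i
  bilaplacian_eq : ∀ x ∈ S, ∀ i, Δ (Δ fun y => U y i) x = powerMap s (U x) i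

namespace IsSolutionOn

lemma mono (hU : IsSolutionOn s U S) (hTS : T ⊆ S) : IsSolutionOn s U T where
  contDiffOn i := (hU.contDiffOn i).mono hTS
  nonneg x hx := hU.nonneg x (hTS hx)
  bilaplacian_eq x hx := hU.bilaplacian_eq x (hTS hx)

lemma continuousOn (hU : IsSolutionOn s U S) : ContinuousOn U S :=
  (PiLp.continuous_toLp 2 fun _ : ι => ℝ).comp_continuousOn
    (continuousOn_pi.2 fun i => (hU.contDiffOn i).continuousOn)

lemma rescale (hs : 1 < s) (hU : IsSolutionOn s U S) (y : E) {a : ℝ} (ha : 0 < a) :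
    IsSolutionOn s (fun z => a ^ (4 / (s - 1)) • U (y + a • z)) ((fun z => y + a • z) ⁻¹' S) where
  contDiffOn i := contDiffOn_const.mul
    ((hU.contDiffOn i).comp (by fun_prop) (Set.mapsTo_preimage _ _))
  nonneg z hz i := mul_nonneg (by positivity) (hU.nonneg _ hz i)
  bilaplacian_eq z hz i := by
    have hexp : (a ^ (4 / (s - 1))) ^ s = a ^ (4 / (s - 1)) * a ^ 4 := by
      have : s - 1 ≠ 0 := by linarith
      rw [← Real.rpow_mul ha.le, ← Real.rpow_natCast a 4, ← Real.rpow_add ha]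
      congr 1
      field_simp
      push_cast
      ring
    simp only [powerMap_smul (Real.rpow_pos_of_pos ha _), PiLp.smul_apply, smul_eq_mul, hexp]
    rw [bilaplacian_const_mul_comp_add_smul _ _ fun x => U x i, hU.bilaplacian_eq _ hz]

variable [MeasurableSpace E] [BorelSpace E]

lemma localRieszSolution (hm : 0 < m) (hE : finrank ℝ E = m + 4) (hS : IsOpen S)
    (hU : IsSolutionOn s U S) (hM₀ : 0 ≤ M) (hM : ∀ x ∈ S, ‖U x‖ ≤ M) :
    LocalRieszSolution m s (biharmonicConst E m) M (remainderKernel m) S (S.indicator U) where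
  const_pos := biharmonicConst_pos hm hE
  integrable_kernel := integrable_remainderKernel
  measurable := by
    classical
    rw [← Set.piecewise_eq_indicator]
    exact hU.continuousOn.measurable_piecewise continuousOn_const hS.measurableSet
  nonneg x i := by
    by_cases hx : x ∈ S
    · simpa [hx] using hU.nonneg x hx i
    · simp [hx]
  norm_le x := by
    by_cases hx : x ∈ S
    · simpa [hx] using hM x hx
    · simpa [hx] using hM₀
  mul_eq x R hR hball i := by
    have hmem {z : E} (hz : z ∈ closedBall (0 : E) 1) : x + R • z ∈ S := by
      refine hball ?_
      rw [mem_closedBall, dist_self_add_left, norm_smul, Real.norm_of_nonneg hR.le]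
      exact mul_le_of_le_one_right hR.le (by simpa using hz)
    have hsmooth : ∀ y ∈ closedBall x R, ContDiffAt ℝ 4 (fun y => U y i) y := fun y hy =>
      (hU.contDiffOn i).contDiffAt (hS.mem_nhds (hball hy))
    rw [Set.indicator_of_mem (hball (mem_closedBall_self hR.le)),
      representation_formula hE hR.le hsmooth, hE, Nat.add_sub_cancel_left]
    congr 3 <;> ext z
    · by_cases hz : z ∈ closedBall (0 : E) 1
      · rw [Set.indicator_of_mem (hmem hz)]
      · rw [remainderKernel_eq_zero hz, zero_mul, zero_mul]
    · by_cases hz : z ∈ closedBall (0 : E) 1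
      · rw [Set.indicator_of_mem (hmem hz), hU.bilaplacian_eq _ (hmem hz)]
      · rw [cutoffKernel_eq_zero hz, zero_mul, zero_mul]

lemma exists_rescaled_localRieszSolution (hm : 0 < m) (hE : finrank ℝ E = m + 4) (hs : 1 < s)
    {x : E} {r k : ℝ} (hr : 0 < r) (hk : 0 < k) (hU : IsSolutionOn s U (ball x r))
    (hlarge : 4 * k < ‖U x‖ ^ (4 / (s - 1))⁻¹ * r) :
    ∃ (D : Set E) (W : E → EuclideanSpace ℝ ι), ball 0 k ⊆ D ∧ ‖W 0‖ = 1 ∧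
      LocalRieszSolution m s (biharmonicConst E m) (2 ^ (4 / (s - 1))) (remainderKernel m) D W := by
  have : 0 < s - 1 := by linarith
  let f : E → ℝ := fun z => ‖U z‖ ^ (4 / (s - 1))⁻¹
  have hfrpow (z : E) : f z ^ (4 / (s - 1)) = ‖U z‖ :=
    Real.rpow_inv_rpow (norm_nonneg _) (by positivity)
  have hsub : closedBall x (r / 2) ⊆ ball x r := closedBall_subset_ball (by linarith)
  obtain ⟨y, hfy, hball⟩ := exists_forall_mem_ball_le_two_mul (f := f) (half_pos hr).le
    ((hU.continuousOn.mono hsub).norm.rpow_const fun _ _ => Or.inr (by positivity))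
    fun z _ => by positivity
  set d : ℝ := r / 2 - dist y x
  have hkd : 2 * k < f y * d := by linarith
  have hfy₀ : 0 < f y := (by positivity : 0 ≤ f y).lt_of_ne fun h => by
    rw [← h, zero_mul] at hkd; linarith
  have hball₀ : ball 0 k ⊆ (fun z => y + (f y)⁻¹ • z) ⁻¹' ball y (d / 2) := fun z hz => by
    rw [mem_ball_zero_iff] at hz
    rw [Set.mem_preimage, mem_ball, dist_self_add_left, norm_smul, norm_inv,
      Real.norm_of_nonneg hfy₀.le, inv_mul_lt_iff₀ hfy₀]
    linarith
  have hW := (hU.mono fun z hz => hsub (hball z hz).1).rescale hs y (inv_pos.2 hfy₀)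
  have hnorm (z : E) : ‖(f y)⁻¹ ^ (4 / (s - 1)) • U (y + (f y)⁻¹ • z)‖
      = (f (y + (f y)⁻¹ • z) / f y) ^ (4 / (s - 1)) := by
    rw [norm_smul, Real.norm_of_nonneg (by positivity), div_eq_inv_mul (f _),
      Real.mul_rpow (by positivity) (by positivity), hfrpow]
  refine ⟨_, _, hball₀, ?_, hW.localRieszSolution hm hE (isOpen_ball.preimage (by fun_prop))
    (by positivity) fun z hz => ?_⟩
  · rw [Set.indicator_of_mem (hball₀ (mem_ball_self hk)), hnorm, smul_zero, add_zero,
      div_self hfy₀.ne', Real.one_rpow]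
  · rw [hnorm]
    gcongr
    exact (div_le_iff₀ hfy₀).2 (hball _ hz).2

end IsSolutionOn

end Solution

/-! ### Maps between coordinate spaces -/

section Coordinates

open Laplacian

variable {n p : ℕ} {u : EuclideanSpace ℝ (Fin n) → ℝ} {x : EuclideanSpace ℝ (Fin n)}

lemma lap_eq_laplacian (hu : ContDiffAt ℝ 2 u x) : lap u x = Δ u x := by
  simp only [laplacian_eq_sum_fderiv (EuclideanSpace.basisFun (Fin n) ℝ) hu,
    EuclideanSpace.basisFun_apply, lap]

lemma bilap_eq_bilaplacian (hu : ContDiffAt ℝ 4 u x) : bilap u x = Δ (Δ u) x := by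
  have hnear : lap u =ᶠ[𝓝 x] Δ u := (hu.eventually (by simp)).mono fun y hy =>
    lap_eq_laplacian (hy.of_le (by norm_num))
  rw [bilap, lap_eq_laplacian ((contDiffAt_two_laplacian hu).congr_of_eventuallyEq hnear)]
  exact (InnerProductSpace.laplacian_congr_nhds hnear).eq_of_nhds

lemma vnorm_eq_norm (U : Fin p → EuclideanSpace ℝ (Fin n) → ℝ) (x : EuclideanSpace ℝ (Fin n)) :
    vnorm U x = ‖WithLp.toLp 2 fun i => U i x‖ := by
  simp [vnorm, EuclideanSpace.norm_eq]

lemma isSolutionOn_toLp {U : Fin p → EuclideanSpace ℝ (Fin n) → ℝ} {s : ℝ}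
    {S : Set (EuclideanSpace ℝ (Fin n))} (hS : IsOpen S) (hnonneg : ∀ i, ∀ x ∈ S, 0 ≤ U i x)
    (hU : ∀ i, ContDiffOn ℝ 4 (U i) S)
    (hbilap : ∀ i, ∀ x ∈ S, bilap (U i) x = vnorm U x ^ (s - 1) * U i x) :
    IsSolutionOn s (fun x => WithLp.toLp 2 fun i => U i x) S where
  contDiffOn := hU
  nonneg x hx i := hnonneg i x hx
  bilaplacian_eq x hx i := by
    rw [← bilap_eq_bilaplacian ((hU i).contDiffAt (hS.mem_nhds hx)), powerMap_apply,
      ← vnorm_eq_norm]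
    exact hbilap i x hx

end Coordinates

end BiharmonicSystem

theorem statement16_general {E ι : Type*} [NormedAddCommGroup E] [InnerProductSpace ℝ E]
    [FiniteDimensional ℝ E] [Fintype ι] {s : ℝ} (hE : 5 ≤ Module.finrank ℝ E) (hs₁ : 1 < s)
    (hs₂ : s < ((Module.finrank ℝ E : ℝ) + 4) / ((Module.finrank ℝ E : ℝ) - 4)) :
    ∃ C > (0 : ℝ), ∀ (U : E → EuclideanSpace ℝ ι) (x : E) (r : ℝ), 0 < r →
      BiharmonicSystem.IsSolutionOn s U (ball x r) → ‖U x‖ ≤ C * r ^ (-(4 / (s - 1))) := by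
  borelize E
  have hs := BiharmonicSystem.SubcriticalExponent.of_lt_div hE hs₁ hs₂
  have := sub_pos.2 hs₁
  by_contra! hno
  choose U x r hr hU hlarge using fun k : ℕ =>
    hno ((4 * ((k : ℝ) + 1)) ^ (4 / (s - 1))) (by positivity)
  have hlarge' (k : ℕ) : 4 * ((k : ℝ) + 1) < ‖U k (x k)‖ ^ (4 / (s - 1))⁻¹ * r k :=
    BiharmonicSystem.lt_rpow_inv_mul (by positivity) (hr k) (by positivity) (hlarge k)
  choose D W hD hW₁ hW using fun k : ℕ => (hU k).exists_rescaled_localRieszSolution hs.pos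
    (by omega) hs₁ (hr k) (by positivity : 0 < (k : ℝ) + 1) (hlarge' k)
  have hexhaust : ∀ (y : E) (R : ℝ), ∀ᶠ k in atTop, closedBall y R ⊆ D k := fun y R => by
    filter_upwards [tendsto_natCast_atTop_atTop.eventually_ge_atTop (R + dist y 0)] with k hk
    exact (closedBall_subset_ball' (by linarith)).trans (hD k)
  obtain ⟨k, hk⟩ := BiharmonicSystem.LocalRieszSolution.exists_norm_lt hs hexhaust hW 0 one_pos
  exact hk.ne (hW₁ k)

/-- universal upper bound, with a constant depending only on
`n`, `p` and `s`, for nonnegative solutions on the punctured unit ball: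
`|U(x)| ≤ C |x|^{-4/(s-1)}` for `0 < |x| < 1/2`. -/
theorem statement16 (n p : ℕ) (hn : 5 ≤ n) (hp : 1 ≤ p) (s : ℝ)
    (hs1 : 1 < s) (hs2 : s < ((n : ℝ) + 4) / ((n : ℝ) - 4)) :
    ∃ C > (0 : ℝ),
      ∀ U : Fin p → EuclideanSpace ℝ (Fin n) → ℝ,
        (∀ i, ∀ x ∈ Metric.ball (0 : EuclideanSpace ℝ (Fin n)) 1 \ {0}, 0 ≤ U i x) →
        (∀ i, ContDiffOn ℝ 4 (U i)
          (Metric.ball (0 : EuclideanSpace ℝ (Fin n)) 1 \ {0})) →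
        (∀ i, ∀ x ∈ Metric.ball (0 : EuclideanSpace ℝ (Fin n)) 1 \ {0},
          bilap (U i) x = (vnorm U x) ^ (s - 1) * U i x) →
        ∀ x : EuclideanSpace ℝ (Fin n), 0 < ‖x‖ → ‖x‖ < 1 / 2 →
          vnorm U x ≤ C * ‖x‖ ^ (-(4 / (s - 1))) := by
  obtain ⟨C, hC, hbound⟩ := statement16_general (E := EuclideanSpace ℝ (Fin n)) (ι := Fin p)
    (by simpa using hn) hs1 (by simpa using hs2)
  refine ⟨C, hC, fun U hnonneg hU hbilap x hx hx_half => ?_⟩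
  have hball : ball x ‖x‖ ⊆ ball 0 1 \ {0} := fun y hy =>
    ⟨ball_subset_ball' (by rw [dist_zero_right]; linarith) hy, by rintro rfl; simp at hy⟩
  have hsol := (BiharmonicSystem.isSolutionOn_toLp
    (isOpen_ball.sdiff isClosed_singleton) hnonneg hU hbilap).mono hball
  have hle := hbound _ x _ hx hsol
  rw [BiharmonicSystem.vnorm_eq_norm]
  exact hle
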